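/- arXiv:1412.4106 — 3 statements merged into one kernel-verified Lean document; each statement's English description precedes it below -/
import Mathlib

section
/- With H and φ as in the hairpin construction, there exists a numerical constant c₀ > 0 such that |∇H(x)| ≥ min(1/2, c₀|x|) for all x ∈ Ω₁. -/
open Complex

/-!
Let `G` be the complex derivative of `V`. The Cauchy–Riemann equations give `|∇H| = |G|`, and
differentiating `V (φ ζ) = cosh ζ` gives `|G (φ ζ)| = |sinh ζ / (1 + cosh ζ)| = |tanh (ζ / 2)|`.
Put `w = ζ / 2`. If `|tanh w| ≥ 1/2` we are done. Otherwise `cosh² w (1 - tanh² w) = 1` bounds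
`|cosh w|`, and `|ζ| ≤ π |sinh w|` (Jordan's inequality) together with `sinh ζ = 2 sinh w cosh w`
bounds `|φ ζ| = |ζ + sinh ζ|` by a multiple of `|sinh w|`, hence of `|tanh w|`.
-/

section ComplexHyperbolic

variable {z : ℂ}

lemma re_cosh (z : ℂ) : (cosh z).re = Real.cosh z.re * Real.cos z.im := by
  conv_lhs => rw [← re_add_im z, cosh_add, cosh_mul_I, sinh_mul_I]
  simp [cos_ofReal_re]

lemma norm_sinh_sq (z : ℂ) : ‖sinh z‖ ^ 2 = Real.sinh z.re ^ 2 + Real.sin z.im ^ 2 := by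
  have sinh_eq : sinh z = (Real.sinh z.re * Real.cos z.im : ℝ) +
      (Real.cosh z.re * Real.sin z.im : ℝ) * I := by
    conv_lhs => rw [← re_add_im z, sinh_add, cosh_mul_I, sinh_mul_I]
    push_cast
    ring
  rw [← normSq_eq_norm_sq, sinh_eq, normSq_add_mul_I, mul_pow, mul_pow, Real.cosh_sq,
    Real.cos_sq']
  ring

lemma cosh_ne_zero_of_abs_im_lt_pi_div_two (hz : |z.im| < Real.pi / 2) : cosh z ≠ 0 := by
  have re_pos : 0 < (cosh z).re := by
    rw [re_cosh]
    exact mul_pos (Real.cosh_pos _) (Real.cos_pos_of_mem_Ioo (abs_lt.mp hz))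
  exact fun h => re_pos.ne' (by rw [h, zero_re])

lemma norm_le_pi_div_two_mul_norm_sinh (hz : |z.im| ≤ Real.pi / 2) :
    ‖z‖ ≤ Real.pi / 2 * ‖sinh z‖ := by
  have re_bound : |z.re| ≤ Real.pi / 2 * |Real.sinh z.re| := by
    have self_le : |z.re| ≤ |Real.sinh z.re| := by
      rw [Real.abs_sinh]
      exact Real.self_le_sinh_iff.mpr (abs_nonneg _)
    exact self_le.trans (le_mul_of_one_le_left (abs_nonneg _) Real.one_le_pi_div_two)
  have im_bound : |z.im| ≤ Real.pi / 2 * |Real.sin z.im| := by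
    have jordan := Real.mul_abs_le_abs_sin hz
    rwa [← inv_div, inv_mul_le_iff₀ (by positivity)] at jordan
  refine le_of_sq_le_sq ?_ (by positivity)
  calc ‖z‖ ^ 2 = |z.re| ^ 2 + |z.im| ^ 2 := by
        rw [sq_abs, sq_abs, ← normSq_eq_norm_sq, normSq_apply, sq, sq]
    _ ≤ (Real.pi / 2 * |Real.sinh z.re|) ^ 2 + (Real.pi / 2 * |Real.sin z.im|) ^ 2 := by gcongr
    _ = (Real.pi / 2 * ‖sinh z‖) ^ 2 := by
        rw [mul_pow, mul_pow, mul_pow, sq_abs, sq_abs, norm_sinh_sq]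
        ring

lemma norm_cosh_sq_mul_one_sub_norm_tanh_sq_le_one (hz : cosh z ≠ 0) :
    ‖cosh z‖ ^ 2 * (1 - ‖tanh z‖ ^ 2) ≤ 1 := by
  have identity : cosh z ^ 2 * (1 - tanh z ^ 2) = 1 := by
    rw [tanh_eq_sinh_div_cosh]
    field_simp
    exact cosh_sq_sub_sinh_sq z
  calc ‖cosh z‖ ^ 2 * (1 - ‖tanh z‖ ^ 2)
      = ‖cosh z‖ ^ 2 * (‖(1 : ℂ)‖ - ‖tanh z ^ 2‖) := by rw [norm_one, norm_pow]
    _ ≤ ‖cosh z‖ ^ 2 * ‖1 - tanh z ^ 2‖ := by gcongr; exact norm_sub_norm_le _ _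
    _ = 1 := by rw [← norm_pow, ← norm_mul, identity, norm_one]

lemma one_add_cosh_eq_two_mul_cosh_half_sq (z : ℂ) : 1 + cosh z = 2 * cosh (z / 2) ^ 2 := by
  have double := cosh_two_mul (z / 2)
  rw [mul_div_cancel₀ z two_ne_zero, sinh_sq] at double
  rw [double]
  ring

lemma sinh_eq_two_mul_sinh_half_mul_cosh_half (z : ℂ) :
    sinh z = 2 * sinh (z / 2) * cosh (z / 2) := by
  rw [← sinh_two_mul, mul_div_cancel₀ z two_ne_zero]

lemma sinh_div_one_add_cosh (z : ℂ) : sinh z / (1 + cosh z) = tanh (z / 2) := by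
  rw [one_add_cosh_eq_two_mul_cosh_half_sq, sinh_eq_two_mul_sinh_half_mul_cosh_half,
    tanh_eq_sinh_div_cosh]
  field_simp

end ComplexHyperbolic

lemma hasGradientAt_re_of_hasDerivAt {f : ℂ → ℂ} {f' z : ℂ} (hf : HasDerivAt f f' z) :
    HasGradientAt (fun w => (f w).re) (starRingEnd ℂ f') z := by
  rw [hasGradientAt_iff_hasFDerivAt]
  refine (reCLM.hasFDerivAt.comp z (hf.hasFDerivAt.restrictScalars ℝ)).congr_fderiv ?_
  ext v
  simp [Complex.inner]

/-- The conformal parametrization `ζ ↦ i (ζ + sinh ζ)` of the hairpin domain `Ω₁` by the strip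
`|Im ζ| < π / 2`, taken here on the whole plane. -/
noncomputable def hairpinMap (ζ : ℂ) : ℂ := I * (ζ + sinh ζ)

namespace hairpinMap

variable {ζ : ℂ}

lemma hasDerivAt (ζ : ℂ) : HasDerivAt hairpinMap (I * (1 + cosh ζ)) ζ :=
  ((hasDerivAt_id ζ).add (hasDerivAt_sinh ζ)).const_mul I

lemma norm_gradient_re_eq_norm_tanh {V : ℂ → ℂ} (hζ : cosh (ζ / 2) ≠ 0)
    (hV : DifferentiableAt ℂ V (hairpinMap ζ)) (hVcosh : V ∘ hairpinMap =ᶠ[nhds ζ] cosh) :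
    ‖gradient (fun z => (V z).re) (hairpinMap ζ)‖ = ‖tanh (ζ / 2)‖ := by
  have one_add_cosh_ne_zero : 1 + cosh ζ ≠ 0 := by
    rw [one_add_cosh_eq_two_mul_cosh_half_sq]
    exact mul_ne_zero two_ne_zero (pow_ne_zero 2 hζ)
  have chain_rule : deriv V (hairpinMap ζ) * (I * (1 + cosh ζ)) = sinh ζ :=
    ((hV.hasDerivAt.comp ζ (hasDerivAt ζ)).congr_of_eventuallyEq hVcosh.symm).unique
      (hasDerivAt_cosh ζ)
  have deriv_mul_I : deriv V (hairpinMap ζ) * I = tanh (ζ / 2) := by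
    rw [← sinh_div_one_add_cosh, eq_div_iff one_add_cosh_ne_zero, mul_assoc, chain_rule]
  rw [(hasGradientAt_re_of_hasDerivAt hV.hasDerivAt).gradient, RCLike.norm_conj, ← deriv_mul_I,
    norm_mul, norm_I, mul_one]

lemma norm_le_norm_sinh_half_mul (hζ : |ζ.im| ≤ Real.pi) :
    ‖hairpinMap ζ‖ ≤ ‖sinh (ζ / 2)‖ * (Real.pi + 2 * ‖cosh (ζ / 2)‖) := by
  have half_bound : ‖ζ / 2‖ ≤ Real.pi / 2 * ‖sinh (ζ / 2)‖ := by
    refine norm_le_pi_div_two_mul_norm_sinh ?_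
    rw [div_ofNat_im, abs_div, Nat.abs_ofNat]
    gcongr
  have norm_bound : ‖ζ‖ ≤ Real.pi * ‖sinh (ζ / 2)‖ := by
    rw [norm_div, norm_ofNat] at half_bound
    linarith
  calc ‖hairpinMap ζ‖ = ‖ζ + sinh ζ‖ := by rw [hairpinMap, norm_mul, norm_I, one_mul]
    _ ≤ ‖ζ‖ + ‖sinh ζ‖ := norm_add_le _ _
    _ ≤ Real.pi * ‖sinh (ζ / 2)‖ + 2 * ‖sinh (ζ / 2)‖ * ‖cosh (ζ / 2)‖ := by
        rw [sinh_eq_two_mul_sinh_half_mul_cosh_half, norm_mul, norm_mul, norm_ofNat]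
        gcongr
    _ = ‖sinh (ζ / 2)‖ * (Real.pi + 2 * ‖cosh (ζ / 2)‖) := by ring

lemma norm_le_eight_mul_norm_tanh_half (hζ : |ζ.im| ≤ Real.pi) (hcosh : cosh (ζ / 2) ≠ 0)
    (htanh : ‖tanh (ζ / 2)‖ ≤ 1 / 2) : ‖hairpinMap ζ‖ ≤ 8 * ‖tanh (ζ / 2)‖ := by
  have sinh_eq : ‖sinh (ζ / 2)‖ = ‖tanh (ζ / 2)‖ * ‖cosh (ζ / 2)‖ := by
    rw [← norm_mul, tanh_eq_sinh_div_cosh, div_mul_cancel₀ _ hcosh]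
  have cosh_sq_le : ‖cosh (ζ / 2)‖ ^ 2 ≤ 4 / 3 := by
    have tanh_sq_le : ‖tanh (ζ / 2)‖ ^ 2 ≤ (1 / 2) ^ 2 := by gcongr
    nlinarith [norm_cosh_sq_mul_one_sub_norm_tanh_sq_le_one hcosh, sq_nonneg ‖cosh (ζ / 2)‖]
  have cosh_le : ‖cosh (ζ / 2)‖ ≤ 6 / 5 := le_of_sq_le_sq (by linarith) (by norm_num)
  have factor_le : ‖cosh (ζ / 2)‖ * (Real.pi + 2 * ‖cosh (ζ / 2)‖) ≤ 8 := by
    nlinarith [mul_le_mul_of_nonneg_left Real.pi_le_four (norm_nonneg (cosh (ζ / 2)))]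
  calc ‖hairpinMap ζ‖ ≤ ‖sinh (ζ / 2)‖ * (Real.pi + 2 * ‖cosh (ζ / 2)‖) :=
        norm_le_norm_sinh_half_mul hζ
    _ = ‖cosh (ζ / 2)‖ * (Real.pi + 2 * ‖cosh (ζ / 2)‖) * ‖tanh (ζ / 2)‖ := by
        rw [sinh_eq]
        ring
    _ ≤ 8 * ‖tanh (ζ / 2)‖ := by gcongr

lemma min_le_norm_tanh_half (hζ : |ζ.im| ≤ Real.pi) (hcosh : cosh (ζ / 2) ≠ 0) :
    min (1 / 2) (1 / 8 * ‖hairpinMap ζ‖) ≤ ‖tanh (ζ / 2)‖ := by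
  rcases le_total (1 / 2) ‖tanh (ζ / 2)‖ with large | small
  · exact min_le_of_left_le large
  · refine min_le_of_right_le ?_
    linarith [norm_le_eight_mul_norm_tanh_half hζ hcosh small]

lemma min_le_norm_gradient_re {V : ℂ → ℂ} (hζ : |ζ.im| < Real.pi)
    (hV : DifferentiableAt ℂ V (hairpinMap ζ)) (hVcosh : V ∘ hairpinMap =ᶠ[nhds ζ] cosh) :
    min (1 / 2) (1 / 8 * ‖hairpinMap ζ‖) ≤
      ‖gradient (fun z => (V z).re) (hairpinMap ζ)‖ := by
  have hcosh : cosh (ζ / 2) ≠ 0 := by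
    refine cosh_ne_zero_of_abs_im_lt_pi_div_two ?_
    rw [div_ofNat_im, abs_div, Nat.abs_ofNat]
    gcongr
  rw [norm_gradient_re_eq_norm_tanh hcosh hV hVcosh]
  exact min_le_norm_tanh_half hζ.le hcosh

end hairpinMap

/-- Lower bound for the gradient of the hairpin solution: with `H` and `φ`
as in the hairpin construction, there is a numerical constant `c₀ > 0` with
`|∇H(x)| ≥ min(1/2, c₀|x|)` for all `x ∈ Ω₁`. -/
theorem hairpin_gradient_lower_bound
    (S : Set ℂ) (hS : S = {ζ : ℂ | |ζ.im| < Real.pi / 2})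
    (Ω₁ : Set ℂ) (hΩ : Ω₁ = {z : ℂ | |z.re| < Real.pi / 2 + Real.cosh z.im})
    (φ : ℂ → ℂ) (hφ : ∀ ζ, φ ζ = I * (ζ + Complex.sinh ζ))
    (hmaps : Set.MapsTo φ S Ω₁)
    (hsurj : ∀ x ∈ Ω₁, ∃ ζ ∈ S, φ ζ = x)
    (V : ℂ → ℂ) (hV : DifferentiableOn ℂ V Ω₁)
    (hVφ : ∀ ζ ∈ S, V (φ ζ) = Complex.cosh ζ)
    (H : ℂ → ℝ) (hH : ∀ z, H z = (V z).re) :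
    ∃ c₀ > (0 : ℝ), ∀ x ∈ Ω₁, min (1 / 2) (c₀ * ‖x‖) ≤ ‖gradient H x‖ := by
  obtain rfl : φ = hairpinMap := funext hφ
  obtain rfl : H = fun z => (V z).re := funext hH
  have isOpen_S : IsOpen S := hS ▸ isOpen_lt (by fun_prop) (by fun_prop)
  have isOpen_Ω₁ : IsOpen Ω₁ := hΩ ▸ isOpen_lt (by fun_prop) (by fun_prop)
  refine ⟨1 / 8, by norm_num, fun x hx => ?_⟩
  obtain ⟨ζ, hζ, rfl⟩ := hsurj x hx
  have abs_im_lt : |ζ.im| < Real.pi / 2 := by rwa [hS] at hζ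
  refine hairpinMap.min_le_norm_gradient_re (by linarith [Real.pi_pos])
    (hV.differentiableAt (isOpen_Ω₁.mem_nhds hx)) ?_
  filter_upwards [isOpen_S.mem_nhds hζ] with ξ hξ using hVφ ξ hξ
end

section
/- Non-degeneracy of classical solutions: let u be a classical solution of the one-phase free boundary problem in B_R(0) ⊂ ℝ² with no compact connected component of the free boundary, and assume 0 ∈ F(u). Then for all 0 < r < R, sup_{B_r(0)} u = max_{∂B_r(0)} u ≥ r/(2π). -/
open Filter Metric

noncomputable def lap (v : EuclideanSpace ℝ (Fin 2) → ℝ) (x : EuclideanSpace ℝ (Fin 2)) : ℝ :=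
  ∑ i : Fin 2, fderiv ℝ (fun y => fderiv ℝ v y (EuclideanSpace.single i 1)) x
    (EuclideanSpace.single i 1)

/-!
Truncate `u` to `w = ramp δ ∘ u`, a smooth function that vanishes near the zero set and has
gradient `∇u` where `u ≥ 2δ`. Writing `g = deriv (ramp δ) ∘ u`, the inequalities `Δu ≥ 0` and,
for small `δ`, `|∇u| ≥ 1 - ε` on `{0 < u ≤ 2δ}` give `Δw ≥ (1 - ε) |∇g|`. Every circle around `c`
meets the free boundary, because the component through `c` is not compact, and contains a point
with `u > 2δ`, by the maximum principle. So `g` takes both values `0` and `1` on the circle and has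
variation at least `2` along it. Integrating `Δw` over disks, the flux of `∇w` through the
circle of radius `s` is at least about `2s`, so the integral of `w` over angles grows at rate at
least about `2`, whence `2r ≤ 2π max u`.
-/

namespace OnePhase

open Set Module Laplacian InnerProductSpace
open scoped Topology Real

section SecondDerivative

variable {E : Type*} [NormedAddCommGroup E] [NormedSpace ℝ E] {f : E → ℝ} {x : E}

lemma differentiableAt_fderiv (hf : ContDiffAt ℝ 2 f x) : DifferentiableAt ℝ (fderiv ℝ f) x :=
  (hf.fderiv_right (m := 1) (by norm_num)).differentiableAt one_ne_zero

lemma eventually_differentiableAt (hf : ContDiffAt ℝ 2 f x) :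
    ∀ᶠ y in 𝓝 x, DifferentiableAt ℝ f y :=
  (hf.eventually (by simp)).mono fun _ hy => hy.differentiableAt two_ne_zero

lemma fderiv_fderiv_apply_const (hf : ContDiffAt ℝ 2 f x) (v w : E) :
    fderiv ℝ (fun y => fderiv ℝ f y v) x w = fderiv ℝ (fderiv ℝ f) x w v := by
  simp [fderiv_clm_apply (differentiableAt_fderiv hf) (differentiableAt_const v)]

lemma fderiv_fderiv_comp {φ : ℝ → ℝ} (hφ : ContDiff ℝ 2 φ) (hf : ContDiffAt ℝ 2 f x) (v : E) :
    fderiv ℝ (fderiv ℝ (φ ∘ f)) x v v =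
      deriv (deriv φ) (f x) * (fderiv ℝ f x v) ^ 2 +
        deriv φ (f x) * fderiv ℝ (fderiv ℝ f) x v v := by
  have hφ' : Differentiable ℝ (deriv φ) := hφ.differentiable_deriv_two
  have hfirst : fderiv ℝ (φ ∘ f) =ᶠ[𝓝 x] fun y => deriv φ (f y) • fderiv ℝ f y := by
    filter_upwards [eventually_differentiableAt hf] with y hy
    exact ((hφ.differentiable two_ne_zero _).hasDerivAt.comp_hasFDerivAt y hy.hasFDerivAt).fderiv
  have hslope : HasFDerivAt (fun y => deriv φ (f y)) (deriv (deriv φ) (f x) • fderiv ℝ f x) x :=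
    (hφ' _).hasDerivAt.comp_hasFDerivAt x (hf.differentiableAt two_ne_zero).hasFDerivAt
  have hsecond := (hslope.fun_smul (differentiableAt_fderiv hf).hasFDerivAt).fderiv
  rw [hfirst.fderiv_eq, hsecond]
  simp only [add_apply, smul_apply, ContinuousLinearMap.smulRight_apply, smul_eq_mul]
  ring

lemma deriv_deriv_nonpos_of_isLocalMax {g : ℝ → ℝ} {a : ℝ} (hg : ContinuousAt g a)
    (hmax : IsLocalMax g a) : deriv (deriv g) a ≤ 0 := by
  by_contra! hpos
  have hmin : IsLocalMin g a := isLocalMin_of_deriv_deriv_pos hpos hmax.deriv_eq_zero hg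
  have hconst : g =ᶠ[𝓝 a] fun _ => g a := by
    filter_upwards [hmax, hmin] with t using le_antisymm
  have hzero : deriv (deriv g) a = 0 := by simp [hconst.deriv.deriv_eq]
  exact hpos.ne' hzero

lemma fderiv_fderiv_nonpos_of_isLocalMax (hf : ContDiffAt ℝ 2 f x) (hmax : IsLocalMax f x) (v : E) :
    fderiv ℝ (fderiv ℝ f) x v v ≤ 0 := by
  let γ : ℝ → E := fun t => x + t • v
  have hγ (t : ℝ) : HasDerivAt γ v t := by
    simpa [γ] using ((hasDerivAt_id t).smul_const v).const_add x
  have hγ0 : γ 0 = x := by simp [γ]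
  have hγx : Tendsto γ (𝓝 0) (𝓝 x) := hγ0 ▸ (hγ 0).continuousAt
  have hderiv : deriv (f ∘ γ) =ᶠ[𝓝 0] fun t => fderiv ℝ f (γ t) v := by
    filter_upwards [hγx.eventually (eventually_differentiableAt hf)] with t ht
    exact (ht.hasFDerivAt.comp_hasDerivAt t (hγ t)).deriv
  have hderiv2 : deriv (deriv (f ∘ γ)) 0 = fderiv ℝ (fderiv ℝ f) x v v := by
    have hD : HasFDerivAt (fderiv ℝ f) (fderiv ℝ (fderiv ℝ f) x) (γ 0) :=
      hγ0.symm ▸ (differentiableAt_fderiv hf).hasFDerivAt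
    rw [hderiv.deriv_eq]
    simpa using ((hD.comp_hasDerivAt 0 (hγ 0)).clm_apply (hasDerivAt_const 0 v)).deriv
  rw [← hderiv2]
  refine deriv_deriv_nonpos_of_isLocalMax ?_ ?_
  · exact ContinuousAt.comp (hγ0.symm ▸ hf.continuousAt) (hγ 0).continuousAt
  · exact IsMaxFilter.comp_tendsto (hγ0.symm ▸ hmax) (hγ0.symm ▸ hγx)

lemma exists_contDiff_eventuallyEq_nhdsSet [FiniteDimensional ℝ E] {n : ℕ∞}
    {K Ω : Set E} (hK : IsClosed K) (hΩ : IsOpen Ω) (hKΩ : K ⊆ Ω)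
    (hf : ∀ x ∈ Ω, ContDiffAt ℝ n f x) : ∃ f' : E → ℝ, ContDiff ℝ n f' ∧ f' =ᶠ[𝓝ˢ K] f := by
  obtain ⟨χ, hχ0, hχ1, -⟩ := exists_contMDiffMap_zero_one_nhds_of_isClosed (n := n)
    (modelWithCornersSelf ℝ E) hΩ.isClosed_compl hK (disjoint_compl_left_iff_subset.2 hKΩ)
  refine ⟨fun x => χ x * f x, contDiff_iff_contDiffAt.2 fun x => ?_,
    hχ1.mono fun x hx => by simp [hx]⟩
  by_cases hx : x ∈ Ω
  · exact χ.contMDiff.contDiff.contDiffAt.mul (hf x hx)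
  · refine contDiffAt_const (c := 0) |>.congr_of_eventuallyEq ?_
    filter_upwards [eventually_nhdsSet_iff_forall.1 hχ0 x hx] with y hy
    simp [hy]

end SecondDerivative

section LaplaceOperator

variable {E : Type*} [NormedAddCommGroup E] [InnerProductSpace ℝ E] [FiniteDimensional ℝ E]
  {f : E → ℝ} {x : E}

lemma laplacian_eq_sum_fderiv_fderiv {ι : Type*} [Fintype ι] (b : OrthonormalBasis ι ℝ E)
    (f : E → ℝ) (x : E) : Δ f x = ∑ i, fderiv ℝ (fderiv ℝ f) x (b i) (b i) := by
  simp [laplacian_eq_iteratedFDeriv_orthonormalBasis f b, iteratedFDeriv_two_apply]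

lemma lap_eq_laplacian {u : EuclideanSpace ℝ (Fin 2) → ℝ} {x : EuclideanSpace ℝ (Fin 2)}
    (hu : ContDiffAt ℝ 2 u x) : lap u x = Δ u x := by
  simp [lap, laplacian_eq_sum_fderiv_fderiv (EuclideanSpace.basisFun (Fin 2) ℝ),
    fderiv_fderiv_apply_const hu]

lemma continuousAt_laplacian (hf : ContDiffAt ℝ 2 f x) : ContinuousAt (Δ f) x := by
  have hD2 : ContinuousAt (fderiv ℝ (fderiv ℝ f)) x :=
    ((hf.fderiv_right (m := 1) (by norm_num)).fderiv_right (m := 0) (by norm_num)).continuousAt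
  rw [funext (laplacian_eq_sum_fderiv_fderiv (stdOrthonormalBasis ℝ E) f)]
  exact tendsto_finsetSum _ fun i _ =>
    (hD2.clm_apply continuousAt_const).clm_apply continuousAt_const

lemma laplacian_comp {φ : ℝ → ℝ} (hφ : ContDiff ℝ 2 φ) (hf : ContDiffAt ℝ 2 f x) :
    Δ (φ ∘ f) x =
      deriv (deriv φ) (f x) * ‖fderiv ℝ f x‖ ^ 2 + deriv φ (f x) * Δ f x := by
  simp only [laplacian_eq_sum_fderiv_fderiv (stdOrthonormalBasis ℝ E), fderiv_fderiv_comp hφ hf,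
    Finset.sum_add_distrib, ← Finset.mul_sum]
  rw [(stdOrthonormalBasis ℝ E).norm_dual]

lemma mul_norm_fderiv_deriv_comp_le_laplacian_comp {φ : ℝ → ℝ} {k : ℝ} (hφ : ContDiff ℝ 2 φ)
    (hf : ContDiffAt ℝ 2 f x) (hφ' : 0 ≤ deriv φ (f x)) (hφ'' : 0 ≤ deriv (deriv φ) (f x))
    (hlap : 0 ≤ Δ f x) (hk : deriv (deriv φ) (f x) ≠ 0 → k ≤ ‖fderiv ℝ f x‖) :
    k * ‖fderiv ℝ (deriv φ ∘ f) x‖ ≤ Δ (φ ∘ f) x := by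
  have hslope : fderiv ℝ (deriv φ ∘ f) x = deriv (deriv φ) (f x) • fderiv ℝ f x :=
    ((hφ.differentiable_deriv_two _).hasDerivAt.comp_hasFDerivAt x
      (hf.differentiableAt two_ne_zero).hasFDerivAt).fderiv
  have hquad : k * (deriv (deriv φ) (f x) * ‖fderiv ℝ f x‖) ≤
      deriv (deriv φ) (f x) * ‖fderiv ℝ f x‖ ^ 2 := by
    rcases eq_or_ne (deriv (deriv φ) (f x)) 0 with hzero | hne
    · simp [hzero]
    · calc k * (deriv (deriv φ) (f x) * ‖fderiv ℝ f x‖)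
          ≤ ‖fderiv ℝ f x‖ * (deriv (deriv φ) (f x) * ‖fderiv ℝ f x‖) := by gcongr; exact hk hne
        _ = deriv (deriv φ) (f x) * ‖fderiv ℝ f x‖ ^ 2 := by ring
  rw [hslope, norm_smul, Real.norm_of_nonneg hφ'', laplacian_comp hφ hf]
  exact le_add_of_le_of_nonneg hquad (mul_nonneg hφ' hlap)

lemma laplacian_norm_sq (x : E) : Δ (fun y : E => ‖y‖ ^ 2) x = 2 * finrank ℝ E := by
  have hD2 (v : E) : fderiv ℝ (fderiv ℝ fun y : E => ‖y‖ ^ 2) x v v = 2 * ‖v‖ ^ 2 := by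
    rw [fderiv_norm_sq, ((innerSL ℝ).hasFDerivAt.const_smul 2).fderiv,
      ← real_inner_self_eq_norm_sq]
    exact nsmul_eq_mul 2 _
  simp [laplacian_eq_sum_fderiv_fderiv (stdOrthonormalBasis ℝ E), hD2, mul_comm]

lemma laplacian_nonpos_of_isLocalMax (hf : ContDiffAt ℝ 2 f x) (hmax : IsLocalMax f x) :
    Δ f x ≤ 0 := by
  rw [laplacian_eq_sum_fderiv_fderiv (stdOrthonormalBasis ℝ E)]
  exact Finset.sum_nonpos fun i _ => fderiv_fderiv_nonpos_of_isLocalMax hf hmax _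

/-- Adding `ε‖x‖²` makes the Laplacian strictly positive, which rules out interior maxima. -/
theorem le_of_forall_frontier_le_of_laplacian_nonneg [Nontrivial E] {K : Set E} {M : ℝ}
    (hK : IsCompact K) (hcont : ContinuousOn f K)
    (hsmooth : ∀ x ∈ interior K, M < f x → ContDiffAt ℝ 2 f x)
    (hlap : ∀ x ∈ interior K, M < f x → 0 ≤ Δ f x)
    (hfrontier : ∀ x ∈ frontier K, f x ≤ M) : ∀ x ∈ K, f x ≤ M := by
  intro y hy
  by_contra! hlt
  obtain ⟨C, hC⟩ := hK.exists_bound_of_continuousOn (f := fun x : E => ‖x‖ ^ 2) (by fun_prop)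
  obtain ⟨ε, hε, hεC⟩ : ∃ ε > 0, ε * C < f y - M := by
    obtain ⟨ε, hε, h⟩ := exists_pos_mul_lt (sub_pos.2 hlt) C
    exact ⟨ε, hε, mul_comm C ε ▸ h⟩
  let p : E → ℝ := fun x => ‖x‖ ^ 2
  have hp : ContDiff ℝ 2 p := contDiff_norm_sq ℝ
  obtain ⟨z, hzK, hzmax⟩ := hK.exists_isMaxOn ⟨y, hy⟩ (f := f + ε • p)
    (hcont.add (hp.continuous.const_smul ε).continuousOn)
  have hMz : M < f z := by
    have hyz : f y + ε * ‖y‖ ^ 2 ≤ f z + ε * ‖z‖ ^ 2 := hzmax hy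
    have hzC : ε * ‖z‖ ^ 2 ≤ ε * C := by gcongr; simpa using hC z hzK
    nlinarith [sq_nonneg ‖y‖]
  have hzint : z ∈ interior K := by
    by_contra hz
    exact hMz.not_ge (hfrontier z ⟨subset_closure hzK, hz⟩)
  have hfz : ContDiffAt ℝ 2 f z := hsmooth z hzint hMz
  have hpz : ContDiffAt ℝ 2 (ε • p) z := hp.contDiffAt.const_smul ε
  have hnonpos : Δ (f + ε • p) z ≤ 0 := laplacian_nonpos_of_isLocalMax (hfz.add hpz)
    (hzmax.isLocalMax (mem_interior_iff_mem_nhds.1 hzint))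
  rw [hfz.laplacian_add hpz, laplacian_smul ε hp.contDiffAt, laplacian_norm_sq,
    smul_eq_mul] at hnonpos
  have hdim : (0 : ℝ) < finrank ℝ E := mod_cast finrank_pos
  have : 0 < ε * (2 * finrank ℝ E) := by positivity
  linarith [hlap z hzint hMz]

end LaplaceOperator

section Calculus

lemma hasDerivAt_intervalIntegral_of_continuous {F F' : ℝ → ℝ → ℝ} (hF : ∀ s, Continuous (F s))
    (hF' : Continuous (Function.uncurry F'))
    (hderiv : ∀ s t, HasDerivAt (fun s => F s t) (F' s t) s) (a b s : ℝ) :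
    HasDerivAt (fun s => ∫ t in a..b, F s t) (∫ t in a..b, F' s t) s := by
  obtain ⟨C, hC⟩ := ((isCompact_closedBall s 1).prod
    (isCompact_uIcc (a := a) (b := b))).exists_bound_of_continuousOn hF'.continuousOn
  refine (intervalIntegral.hasDerivAt_integral_of_dominated_loc_of_deriv_le (bound := fun _ => C)
    (closedBall_mem_nhds s one_pos) (.of_forall fun s => (hF s).aestronglyMeasurable)
    ((hF s).intervalIntegrable _ _) (hF'.uncurry_left s).aestronglyMeasurable
    (.of_forall fun t ht s hs => hC (s, t) ⟨hs, uIoc_subset_uIcc ht⟩) (by simp)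
    (.of_forall fun t _ s _ => hderiv s t)).2

lemma mul_sub_le_sub_of_forall_le_deriv {f f' : ℝ → ℝ} {a b k : ℝ} (hab : a ≤ b)
    (hf : ∀ s ∈ Icc a b, HasDerivAt f (f' s) s) (hk : ∀ s ∈ Icc a b, k ≤ f' s) :
    k * (b - a) ≤ f b - f a := by
  refine (convex_Icc a b).mul_sub_le_image_sub_of_le_deriv
    (fun s hs => (hf s hs).continuousAt.continuousWithinAt)
    (fun s hs => (hf s (interior_subset hs)).differentiableAt.differentiableWithinAt)
    (fun s hs => ?_) a (left_mem_Icc.2 hab) b (right_mem_Icc.2 hab) hab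
  rw [(hf s (interior_subset hs)).deriv]
  exact hk s (interior_subset hs)

/-- A periodic function climbs from `f a` to `f b` and has to come back within one period. -/
lemma two_mul_sub_le_integral_abs_deriv_of_periodic {f f' : ℝ → ℝ} {T : ℝ} (hT : 0 < T)
    (hf : ∀ t, HasDerivAt f (f' t) t) (hf' : Continuous f') (hper : Function.Periodic f T)
    (hper' : Function.Periodic f' T) (a b : ℝ) : 2 * (f b - f a) ≤ ∫ t in 0..T, |f' t| := by
  obtain ⟨c, ⟨hac, hcT⟩, hbc⟩ := hper.exists_mem_Ico hT b a
  have hint (p q : ℝ) : IntervalIntegrable (fun t => |f' t|) MeasureTheory.volume p q :=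
    hf'.abs.intervalIntegrable p q
  have hvar {p q : ℝ} (hpq : p ≤ q) : |f q - f p| ≤ ∫ t in p..q, |f' t| := by
    rw [← intervalIntegral.integral_eq_sub_of_hasDerivAt (fun t _ => hf t)
      (hf'.intervalIntegrable p q)]
    exact intervalIntegral.abs_integral_le_integral_abs hpq
  calc 2 * (f b - f a)
      = (f c - f a) + (f c - f (a + T)) := by rw [hper a, hbc]; ring
    _ ≤ (∫ t in a..c, |f' t|) + ∫ t in c..a + T, |f' t| :=
        add_le_add ((le_abs_self _).trans (hvar hac))
          ((le_abs_self _).trans (abs_sub_comm (f c) _ ▸ hvar hcT.le))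
    _ = ∫ t in a..a + T, |f' t| :=
        intervalIntegral.integral_add_adjacent_intervals (hint a c) (hint c _)
    _ = ∫ t in 0..T, |f' t| := by
        simpa using (hper'.comp abs).intervalIntegral_add_eq a 0

end Calculus

section PolarCoordinates

variable {E : Type*} [NormedAddCommGroup E] [InnerProductSpace ℝ E]
  (b : OrthonormalBasis (Fin 2) ℝ E) (c : E)

/-- The unit vector at angle `t` in the plane with orthonormal basis `b`; it parametrizes
circles. -/
noncomputable def direction (t : ℝ) : E := Real.cos t • b 0 + Real.sin t • b 1

/-- The integral of `f` over the circle of radius `s` around `c`, with respect to the angle. -/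
noncomputable def angularIntegral (f : E → ℝ) (s : ℝ) : ℝ :=
  ∫ t in 0..2 * π, f (c + s • direction b t)

/-- The flux of the gradient of `f` out of the disk of radius `s` around `c`. -/
noncomputable def radialFlux (f : E → ℝ) (s : ℝ) : ℝ :=
  s * ∫ t in 0..2 * π, fderiv ℝ f (c + s • direction b t) (direction b t)

@[fun_prop]
lemma continuous_direction : Continuous (direction b) := by
  unfold direction
  fun_prop

lemma hasDerivAt_direction (t : ℝ) : HasDerivAt (direction b) (direction b (t + π / 2)) t := by
  rw [direction, Real.cos_add_pi_div_two, Real.sin_add_pi_div_two]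
  exact ((Real.hasDerivAt_cos t).smul_const (b 0)).add ((Real.hasDerivAt_sin t).smul_const (b 1))

lemma direction_add_pi (t : ℝ) : direction b (t + π) = -direction b t := by
  simp [direction, add_comm]

lemma periodic_direction : Function.Periodic (direction b) (2 * π) := fun t => by simp [direction]

lemma norm_direction (t : ℝ) : ‖direction b t‖ = 1 := by
  rw [← sq_eq_sq₀ (norm_nonneg _) zero_le_one, ← b.sum_sq_inner_right]
  simp [direction, Fin.sum_univ_two, inner_add_right, inner_smul_right, b.inner_eq_ite]

variable {c} in
lemma exists_eq_add_smul_direction {s : ℝ} {p : E} (hp : p ∈ sphere c s) :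
    ∃ t, p = c + s • direction b t := by
  let z : ℂ := ⟨b.repr (p - c) 0, b.repr (p - c) 1⟩
  have hz : ‖z‖ = s := by
    rw [← mem_sphere_iff_norm.1 hp, ← b.repr.norm_map, EuclideanSpace.norm_eq, Complex.norm_def,
      Complex.normSq_apply]
    simp [Fin.sum_univ_two, z, sq]
  refine ⟨z.arg, ?_⟩
  have hcos : s * Real.cos z.arg = b.repr (p - c) 0 := hz ▸ Complex.norm_mul_cos_arg z
  have hsin : s * Real.sin z.arg = b.repr (p - c) 1 := hz ▸ Complex.norm_mul_sin_arg z
  rw [direction, smul_add, smul_smul, smul_smul, hcos, hsin, ← Fin.sum_univ_two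
    (fun i => b.repr (p - c) i • b i), b.sum_repr, add_sub_cancel]

lemma add_smul_direction_mem_sphere {s : ℝ} (hs : 0 ≤ s) (t : ℝ) :
    c + s • direction b t ∈ sphere c s := by
  simp [norm_smul, norm_direction, abs_of_nonneg hs]

lemma laplacian_eq_fderiv_fderiv_direction [FiniteDimensional ℝ E] (f : E → ℝ) (x : E) (t : ℝ) :
    Δ f x = fderiv ℝ (fderiv ℝ f) x (direction b t) (direction b t) +
      fderiv ℝ (fderiv ℝ f) x (direction b (t + π / 2)) (direction b (t + π / 2)) := by
  simp only [laplacian_eq_sum_fderiv_fderiv b, Fin.sum_univ_two, direction, map_add, map_smul,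
    add_apply, smul_apply, smul_eq_mul, Real.cos_add_pi_div_two, Real.sin_add_pi_div_two]
  linear_combination (-fderiv ℝ (fderiv ℝ f) x (b 0) (b 0) - fderiv ℝ (fderiv ℝ f) x (b 1) (b 1))
    * Real.sin_sq_add_cos_sq t

variable {w : E → ℝ}

lemma hasDerivAt_ray (s t : ℝ) :
    HasDerivAt (fun s : ℝ => c + s • direction b t) (direction b t) s := by
  simpa using ((hasDerivAt_id s).smul_const (direction b t)).const_add c

lemma hasDerivAt_circle (s t : ℝ) :
    HasDerivAt (fun t => c + s • direction b t) (s • direction b (t + π / 2)) t :=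
  ((hasDerivAt_direction b t).const_smul s).const_add c

lemma hasDerivAt_angularIntegral (hw : ContDiff ℝ 1 w) {s : ℝ} (hs : s ≠ 0) :
    HasDerivAt (angularIntegral b c w) (radialFlux b c w s / s) s := by
  have : Continuous (fderiv ℝ w) := hw.continuous_fderiv one_ne_zero
  rw [radialFlux, mul_div_cancel_left₀ _ hs]
  refine hasDerivAt_intervalIntegral_of_continuous
    (F' := fun s t => fderiv ℝ w (c + s • direction b t) (direction b t))
    (fun s => hw.continuous.comp (by fun_prop)) (by fun_prop) (fun s t => ?_) _ _ s
  exact (hw.differentiable one_ne_zero _).hasFDerivAt.comp_hasDerivAt s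
    (hasDerivAt_ray b c s t)

/-- The derivative of `t ↦ ∂_τ w` along the circle integrates to zero over a full turn. -/
lemma mul_integral_fderiv_fderiv_tangent (hw : ContDiff ℝ 2 w) (s : ℝ) :
    s * ∫ t in 0..2 * π, fderiv ℝ (fderiv ℝ w) (c + s • direction b t)
        (direction b (t + π / 2)) (direction b (t + π / 2)) =
      ∫ t in 0..2 * π, fderiv ℝ w (c + s • direction b t) (direction b t) := by
  have hw1 : ContDiff ℝ 1 (fderiv ℝ w) := hw.fderiv_right (by norm_num)
  have hc1 : Continuous (fderiv ℝ w) := hw1.continuous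
  have : Continuous (fderiv ℝ (fderiv ℝ w)) := hw1.continuous_fderiv one_ne_zero
  have htangent (t : ℝ) :
      HasDerivAt (fun t => fderiv ℝ w (c + s • direction b t) (direction b (t + π / 2)))
        (s * fderiv ℝ (fderiv ℝ w) (c + s • direction b t) (direction b (t + π / 2))
            (direction b (t + π / 2)) - fderiv ℝ w (c + s • direction b t) (direction b t)) t := by
    have hτ : HasDerivAt (fun t => direction b (t + π / 2)) (-direction b t) t := by
      simpa [add_assoc, direction_add_pi] using
        (hasDerivAt_direction b (t + π / 2)).comp_add_const t (π / 2)
    simpa [sub_eq_add_neg] using ((hw1.differentiable one_ne_zero _).hasFDerivAt.comp_hasDerivAt t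
      (hasDerivAt_circle b c s t)).clm_apply hτ
  have hper : Function.Periodic
      (fun t => fderiv ℝ w (c + s • direction b t) (direction b (t + π / 2))) (2 * π) := fun t => by
    simp only [periodic_direction b t, add_right_comm t (2 * π), periodic_direction b (t + π / 2)]
  have hzero := intervalIntegral.integral_eq_sub_of_hasDerivAt (a := 0) (b := 2 * π)
    (fun t _ => htangent t) (Continuous.intervalIntegrable (by fun_prop) _ _)
  rw [intervalIntegral.integral_sub (Continuous.intervalIntegrable (by fun_prop) _ _)
    (Continuous.intervalIntegrable (by fun_prop) _ _), intervalIntegral.integral_const_mul,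
    hper.eq, sub_self] at hzero
  exact sub_eq_zero.1 hzero

theorem hasDerivAt_radialFlux [FiniteDimensional ℝ E] (hw : ContDiff ℝ 2 w) (s : ℝ) :
    HasDerivAt (radialFlux b c w) (s * angularIntegral b c (Δ w) s) s := by
  have hw1 : ContDiff ℝ 1 (fderiv ℝ w) := hw.fderiv_right (by norm_num)
  have hc1 : Continuous (fderiv ℝ w) := hw1.continuous
  have : Continuous (fderiv ℝ (fderiv ℝ w)) := hw1.continuous_fderiv one_ne_zero
  have hradial : HasDerivAt
      (fun s => ∫ t in 0..2 * π, fderiv ℝ w (c + s • direction b t) (direction b t))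
      (∫ t in 0..2 * π, fderiv ℝ (fderiv ℝ w) (c + s • direction b t) (direction b t)
        (direction b t)) s := by
    refine hasDerivAt_intervalIntegral_of_continuous
      (F := fun s t => fderiv ℝ w (c + s • direction b t) (direction b t))
      (F' := fun s t => fderiv ℝ (fderiv ℝ w) (c + s • direction b t) (direction b t)
        (direction b t)) (fun s => by fun_prop) (by fun_prop) (fun s t => ?_) _ _ s
    simpa using ((hw1.differentiable one_ne_zero _).hasFDerivAt.comp_hasDerivAt s
      (hasDerivAt_ray b c s t)).clm_apply (hasDerivAt_const s (direction b t))
  refine ((hasDerivAt_id s).mul hradial).congr_deriv ?_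
  have hlap (t : ℝ) := laplacian_eq_fderiv_fderiv_direction b w (c + s • direction b t) t
  rw [angularIntegral, funext hlap, intervalIntegral.integral_add
    (Continuous.intervalIntegrable (by fun_prop) _ _)
    (Continuous.intervalIntegrable (by fun_prop) _ _), mul_add,
    mul_integral_fderiv_fderiv_tangent b c hw, one_mul, add_comm, id]

end PolarCoordinates

section CircleEstimates

variable {E : Type*} [NormedAddCommGroup E] [InnerProductSpace ℝ E]
  (b : OrthonormalBasis (Fin 2) ℝ E) {c : E} {f g w : E → ℝ} {r s k M : ℝ}

lemma continuous_comp_add_smul_direction {F : Type*} [TopologicalSpace F] {f : E → F}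
    (hs : 0 ≤ s) (hf : ContinuousOn f (sphere c s)) :
    Continuous fun t => f (c + s • direction b t) :=
  hf.comp_continuous (by fun_prop) (add_smul_direction_mem_sphere b c hs)

lemma angularIntegral_congr (hs : 0 ≤ s) (h : EqOn f g (sphere c s)) :
    angularIntegral b c f s = angularIntegral b c g s :=
  intervalIntegral.integral_congr fun t _ => h (add_smul_direction_mem_sphere b c hs t)

lemma angularIntegral_mono (hs : 0 ≤ s) (hf : ContinuousOn f (sphere c s))
    (hg : ContinuousOn g (sphere c s)) (h : ∀ x ∈ sphere c s, f x ≤ g x) :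
    angularIntegral b c f s ≤ angularIntegral b c g s :=
  intervalIntegral.integral_mono_on Real.two_pi_pos.le
    ((continuous_comp_add_smul_direction b hs hf).intervalIntegrable _ _)
    ((continuous_comp_add_smul_direction b hs hg).intervalIntegrable _ _)
    fun t _ => h _ (add_smul_direction_mem_sphere b c hs t)

lemma angularIntegral_nonneg (hs : 0 ≤ s) (hf : ∀ x ∈ sphere c s, 0 ≤ f x) :
    0 ≤ angularIntegral b c f s :=
  intervalIntegral.integral_nonneg Real.two_pi_pos.le
    fun t _ => hf _ (add_smul_direction_mem_sphere b c hs t)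

lemma angularIntegral_const_mul (k : ℝ) :
    angularIntegral b c (fun x => k * f x) s = k * angularIntegral b c f s :=
  intervalIntegral.integral_const_mul _ _

lemma angularIntegral_le (hs : 0 ≤ s) (hf : ContinuousOn f (sphere c s))
    (hM : ∀ x ∈ sphere c s, f x ≤ M) : angularIntegral b c f s ≤ 2 * π * M := by
  refine (angularIntegral_mono b hs hf continuousOn_const hM).trans_eq ?_
  simp [angularIntegral]

theorem two_mul_sub_le_mul_angularIntegral_norm_fderiv (hs : 0 ≤ s)
    (hg : ∀ x ∈ sphere c s, ContDiffAt ℝ 1 g x) {p q : E} (hp : p ∈ sphere c s)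
    (hq : q ∈ sphere c s) :
    2 * (g q - g p) ≤ s * angularIntegral b c (fun x => ‖fderiv ℝ g x‖) s := by
  obtain ⟨a, rfl⟩ := exists_eq_add_smul_direction b hp
  obtain ⟨a', rfl⟩ := exists_eq_add_smul_direction b hq
  have hg' : ContinuousOn (fderiv ℝ g) (sphere c s) := fun x hx =>
    ((hg x hx).fderiv_right (m := 0) (by norm_num)).continuousAt.continuousWithinAt
  have hDg : Continuous fun t => fderiv ℝ g (c + s • direction b t) :=
    continuous_comp_add_smul_direction b hs hg'
  have hderiv : Continuous fun t =>
      fderiv ℝ g (c + s • direction b t) (s • direction b (t + π / 2)) := by fun_prop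
  calc 2 * (g (c + s • direction b a') - g (c + s • direction b a))
      ≤ ∫ t in 0..2 * π, |fderiv ℝ g (c + s • direction b t) (s • direction b (t + π / 2))| := by
        refine two_mul_sub_le_integral_abs_deriv_of_periodic
          (f := fun t => g (c + s • direction b t)) Real.two_pi_pos (fun t => ?_) hderiv
          (fun t => ?_) (fun t => ?_) a a'
        · exact ((hg _ (add_smul_direction_mem_sphere b c hs t)).differentiableAt
            one_ne_zero).hasFDerivAt.comp_hasDerivAt t (hasDerivAt_circle b c s t)
        · simp only [periodic_direction b t]
        · simp only [periodic_direction b t, add_right_comm t (2 * π),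
            periodic_direction b (t + π / 2)]
    _ ≤ ∫ t in 0..2 * π, s * ‖fderiv ℝ g (c + s • direction b t)‖ := by
        refine intervalIntegral.integral_mono_on Real.two_pi_pos.le
          (hderiv.abs.intervalIntegrable _ _)
          ((hDg.norm.const_mul s).intervalIntegrable _ _) fun t _ => ?_
        rw [← Real.norm_eq_abs, mul_comm]
        refine (ContinuousLinearMap.le_opNorm _ _).trans_eq ?_
        rw [norm_smul, norm_direction, mul_one, Real.norm_of_nonneg hs]
    _ = s * angularIntegral b c (fun x => ‖fderiv ℝ g x‖) s :=
        intervalIntegral.integral_const_mul _ _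

variable [FiniteDimensional ℝ E]

/-- The flux through the circle of radius `s` is at least `k (s - ε² r)`, hence at least
`k (1 - ε) s` once `s ≥ ε r`; this bounds the derivative of the angular integral. -/
lemma mul_le_angularIntegral_of_contDiff (hw : ContDiff ℝ 2 w) {ε : ℝ} (hε : ε ∈ Ioo 0 1)
    (hr : 0 < r) (hk : 0 ≤ k) (hnonneg : ∀ x ∈ closedBall c r, 0 ≤ w x)
    (hlap : ∀ x ∈ closedBall c r, 0 ≤ Δ w x)
    (hflux : ∀ s ∈ Icc (ε ^ 2 * r) r, k ≤ s * angularIntegral b c (Δ w) s) :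
    k * (1 - ε) ^ 2 * r ≤ angularIntegral b c w r := by
  obtain ⟨hε0, hε1⟩ := hε
  have hεr : 0 < ε * r := mul_pos hε0 hr
  have hεr' : ε * r ≤ r := mul_le_of_le_one_left hr.le hε1.le
  have hε2r : ε ^ 2 * r ≤ ε * r := by rw [sq, mul_assoc]; exact mul_le_of_le_one_left hεr.le hε1.le
  have hsphere {s : ℝ} (hs : s ≤ r) : sphere c s ⊆ closedBall c r :=
    sphere_subset_closedBall.trans (closedBall_subset_closedBall hs)
  have hinner : 0 ≤ radialFlux b c w (ε ^ 2 * r) := by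
    have := mul_sub_le_sub_of_forall_le_deriv (k := 0) (a := 0) (b := ε ^ 2 * r) (by positivity)
      (fun s _ => hasDerivAt_radialFlux b c hw s) fun s hs => mul_nonneg hs.1 <|
        angularIntegral_nonneg b hs.1 fun x hx => hlap x (hsphere (by linarith [hs.2]) hx)
    simpa [radialFlux] using this
  have houter {s : ℝ} (hs : s ∈ Icc (ε * r) r) : k * (1 - ε) ≤ radialFlux b c w s / s := by
    have hgrowth : k * (s - ε ^ 2 * r) ≤ radialFlux b c w s - radialFlux b c w (ε ^ 2 * r) :=
      mul_sub_le_sub_of_forall_le_deriv (hε2r.trans hs.1)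
        (fun s _ => hasDerivAt_radialFlux b c hw s) fun t ht => hflux t ⟨ht.1, ht.2.trans hs.2⟩
    have hfraction : k * ((1 - ε) * s) ≤ k * (s - ε ^ 2 * r) := by
      gcongr
      nlinarith [hs.1]
    rw [le_div_iff₀ (hεr.trans_le hs.1)]
    linarith
  have hgrowth : k * (1 - ε) * (r - ε * r) ≤
      angularIntegral b c w r - angularIntegral b c w (ε * r) :=
    mul_sub_le_sub_of_forall_le_deriv hεr' (fun s hs => hasDerivAt_angularIntegral b c
      (hw.of_le one_le_two) (hεr.trans_le hs.1).ne') fun s hs => houter hs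
  have hstart : 0 ≤ angularIntegral b c w (ε * r) :=
    angularIntegral_nonneg b hεr.le fun x hx => hnonneg x (hsphere hεr' hx)
  linarith

theorem mul_le_angularIntegral_of_le_mul_angularIntegral_laplacian {Ω : Set E} (hΩ : IsOpen Ω)
    (hrΩ : closedBall c r ⊆ Ω) (hw : ∀ x ∈ Ω, ContDiffAt ℝ 2 w x) {ε : ℝ} (hε : ε ∈ Ioo 0 1)
    (hr : 0 < r) (hk : 0 ≤ k) (hnonneg : ∀ x ∈ closedBall c r, 0 ≤ w x)
    (hlap : ∀ x ∈ closedBall c r, 0 ≤ Δ w x)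
    (hflux : ∀ s ∈ Icc (ε ^ 2 * r) r, k ≤ s * angularIntegral b c (Δ w) s) :
    k * (1 - ε) ^ 2 * r ≤ angularIntegral b c w r := by
  obtain ⟨w', hw', heq⟩ := exists_contDiff_eventuallyEq_nhdsSet (n := 2) isClosed_closedBall hΩ
    hrΩ hw
  have hval : EqOn w' w (closedBall c r) := fun x hx => heq.self_of_nhdsSet hx
  have hlap' : EqOn (Δ w') (Δ w) (closedBall c r) := fun x hx =>
    (laplacian_congr_nhds (eventually_nhdsSet_iff_forall.1 heq x hx)).self_of_nhds
  rw [← angularIntegral_congr b hr.le (hval.mono sphere_subset_closedBall)]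
  refine mul_le_angularIntegral_of_contDiff b hw' hε hr hk
    (fun x hx => (hnonneg x hx).trans_eq (hval hx).symm)
    (fun x hx => (hlap x hx).trans_eq (hlap' hx).symm) fun s hs => ?_
  rw [angularIntegral_congr b ((by positivity : 0 ≤ ε ^ 2 * r).trans hs.1) (hlap'.mono
    (sphere_subset_closedBall.trans (closedBall_subset_closedBall hs.2)))]
  exact hflux s hs

end CircleEstimates

section Ramp

/-- A smooth convex cutoff of the identity: it vanishes on `(-∞, δ]` and has slope one on
`[2δ, ∞)`. -/
noncomputable def ramp (δ t : ℝ) : ℝ := ∫ x in 0..t, Real.smoothTransition (x / δ - 1)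

variable {δ t : ℝ}

lemma hasDerivAt_ramp (δ t : ℝ) : HasDerivAt (ramp δ) (Real.smoothTransition (t / δ - 1)) t := by
  have hcont : Continuous fun x : ℝ => Real.smoothTransition (x / δ - 1) :=
    Real.smoothTransition.continuous.comp (by fun_prop)
  exact intervalIntegral.integral_hasDerivAt_right (hcont.intervalIntegrable _ _)
    (hcont.stronglyMeasurableAtFilter _ _) hcont.continuousAt

lemma deriv_ramp (δ : ℝ) : deriv (ramp δ) = fun t => Real.smoothTransition (t / δ - 1) :=
  funext fun t => (hasDerivAt_ramp δ t).deriv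

lemma contDiff_deriv_ramp (δ : ℝ) {n : ℕ∞} : ContDiff ℝ n (deriv (ramp δ)) := by
  rw [deriv_ramp]
  exact Real.smoothTransition.contDiff.comp (by fun_prop)

lemma contDiff_ramp (δ : ℝ) {n : ℕ∞} : ContDiff ℝ n (ramp δ) :=
  (contDiff_infty_iff_deriv.2 ⟨fun t => (hasDerivAt_ramp δ t).differentiableAt,
    contDiff_deriv_ramp δ⟩).of_le (mod_cast le_top)

lemma deriv_ramp_nonneg (δ t : ℝ) : 0 ≤ deriv (ramp δ) t :=
  deriv_ramp δ ▸ Real.smoothTransition.nonneg _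

lemma deriv_ramp_of_le (hδ : 0 < δ) (ht : t ≤ δ) : deriv (ramp δ) t = 0 :=
  deriv_ramp δ ▸ Real.smoothTransition.zero_of_nonpos (sub_nonpos.2 (div_le_one_of_le₀ ht hδ.le))

lemma deriv_ramp_of_two_mul_le (hδ : 0 < δ) (ht : 2 * δ ≤ t) : deriv (ramp δ) t = 1 := by
  have : 2 ≤ t / δ := (le_div_iff₀ hδ).2 ht
  exact deriv_ramp δ ▸ Real.smoothTransition.one_of_one_le (by linarith)

lemma deriv_deriv_ramp_nonneg (hδ : 0 < δ) (t : ℝ) : 0 ≤ deriv (deriv (ramp δ)) t := by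
  have hmono : Monotone (deriv (ramp δ)) := fun x y hxy => by
    rw [deriv_ramp]
    exact Real.smoothTransition.monotone (by gcongr)
  exact hmono.deriv_nonneg

lemma deriv_deriv_ramp_of_two_mul_lt (hδ : 0 < δ) (ht : 2 * δ < t) :
    deriv (deriv (ramp δ)) t = 0 := by
  have hone : deriv (ramp δ) =ᶠ[𝓝 t] fun _ => 1 := by
    filter_upwards [Ioi_mem_nhds ht] with x hx using deriv_ramp_of_two_mul_le hδ (le_of_lt hx)
  simp [hone.deriv_eq]

lemma ramp_of_le (hδ : 0 < δ) (ht : t ≤ δ) : ramp δ t = 0 := by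
  have hzero : EqOn (fun x : ℝ => Real.smoothTransition (x / δ - 1)) 0 (uIcc 0 t) := fun x hx =>
    Real.smoothTransition.zero_of_nonpos <| sub_nonpos.2 <|
      div_le_one_of_le₀ (hx.2.trans (max_le hδ.le ht)) hδ.le
  simp [ramp, intervalIntegral.integral_congr hzero]

lemma ramp_nonneg (δ : ℝ) (ht : 0 ≤ t) : 0 ≤ ramp δ t :=
  intervalIntegral.integral_nonneg ht fun _ _ => Real.smoothTransition.nonneg _

lemma ramp_le_self (δ : ℝ) (ht : 0 ≤ t) : ramp δ t ≤ t := by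
  have hcont : Continuous fun x : ℝ => Real.smoothTransition (x / δ - 1) :=
    Real.smoothTransition.continuous.comp (by fun_prop)
  calc ramp δ t ≤ ∫ _ in 0..t, (1 : ℝ) :=
        intervalIntegral.integral_mono_on ht (hcont.intervalIntegrable _ _)
          intervalIntegrable_const fun x _ => Real.smoothTransition.le_one _
    _ = t := by simp

end Ramp

section FreeBoundary

/-- The positive phase of `u` in `Ω`. -/
def positivePhase {X : Type*} (u : X → ℝ) (Ω : Set X) : Set X := {x ∈ Ω | 0 < u x}

/-- The free boundary of `u` in `Ω`: the boundary of the positive phase, relative to `Ω`. -/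
def freeBoundary {X : Type*} [TopologicalSpace X] (u : X → ℝ) (Ω : Set X) : Set X :=
  frontier (positivePhase u Ω) ∩ Ω

/-- Otherwise the component would be contained in the ball, and closed there. -/
lemma exists_mem_sphere_of_not_isCompact_connectedComponentIn {X : Type*} [MetricSpace X]
    [ProperSpace X] {C Ω : Set X} {x : X} {s : ℝ} (hC : IsClosed C) (hs : 0 < s)
    (hsΩ : closedBall x s ⊆ Ω) (hcomp : ¬ IsCompact (connectedComponentIn (C ∩ Ω) x)) :
    ∃ p ∈ sphere x s, p ∈ C ∩ Ω := by
  set P := connectedComponentIn (C ∩ Ω) x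
  have hxC : x ∈ C ∩ Ω := by
    by_contra hx
    exact hcomp (by simp [P, connectedComponentIn_eq_empty hx])
  have hxP : x ∈ P := mem_connectedComponentIn hxC
  by_contra! havoid
  have hPball : P ⊆ ball x s := by
    refine isPreconnected_connectedComponentIn.subset_left_of_subset_union isOpen_ball
      isClosed_closedBall.isOpen_compl
      (disjoint_compl_right_iff_subset.2 ball_subset_closedBall) (fun y hy => ?_)
      ⟨x, hxP, mem_ball_self hs⟩
    rcases lt_trichotomy (dist y x) s with hlt | heq | hgt
    · exact .inl hlt
    · exact (havoid y heq (connectedComponentIn_subset _ _ hy)).elim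
    · exact .inr (by simpa using hgt)
  have hclosure : closure P ⊆ C ∩ closedBall x s :=
    closure_minimal (subset_inter ((connectedComponentIn_subset _ _).trans inter_subset_left)
      (hPball.trans ball_subset_closedBall)) (hC.inter isClosed_closedBall)
  have hclosed : IsClosed P := isClosed_of_closure_subset <|
    isPreconnected_connectedComponentIn.closure.subset_connectedComponentIn (subset_closure hxP)
      (hclosure.trans (inter_subset_inter_right C hsΩ))
  exact hcomp ((isCompact_closedBall x s).of_isClosed_subset hclosed
    (hPball.trans ball_subset_closedBall))

end FreeBoundary

section ClassicalSubsolution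

variable {E : Type*} [NormedAddCommGroup E] [InnerProductSpace ℝ E] [FiniteDimensional ℝ E]

/-- Classical subsolutions of the one-phase free boundary problem in `Ω`: subharmonic in the
positive phase, with `|∇u| ≥ 1` on the free boundary. The free boundary condition is encoded as
`liminf |∇u| ≥ 1` along the positive phase, and `|∇u|` as the norm of the derivative. -/
structure IsClassicalSubsolution (u : E → ℝ) (Ω : Set E) : Prop where
  isOpen : IsOpen Ω
  continuousOn : ContinuousOn u Ω
  nonneg : ∀ x ∈ Ω, 0 ≤ u x
  contDiffAt : ∀ x ∈ positivePhase u Ω, ContDiffAt ℝ 2 u x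
  laplacian_nonneg : ∀ x ∈ positivePhase u Ω, 0 ≤ Δ u x
  eventually_lt_norm_fderiv : ∀ x ∈ freeBoundary u Ω, ∀ k < 1,
    ∀ᶠ y in 𝓝[positivePhase u Ω] x, k < ‖fderiv ℝ u y‖

namespace IsClassicalSubsolution

variable {u : E → ℝ} {Ω : Set E} {c x : E} {r k M δ : ℝ}

lemma isOpen_positivePhase (hu : IsClassicalSubsolution u Ω) : IsOpen (positivePhase u Ω) :=
  hu.continuousOn.isOpen_inter_preimage hu.isOpen isOpen_Ioi

lemma eq_zero_of_mem_freeBoundary (hu : IsClassicalSubsolution u Ω)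
    (hx : x ∈ freeBoundary u Ω) : u x = 0 := by
  have hnot : x ∉ positivePhase u Ω := hu.isOpen_positivePhase.frontier_eq ▸ hx.1 |>.2
  exact (hu.nonneg x hx.2).antisymm' (not_lt.1 fun hpos => hnot ⟨hx.2, hpos⟩)

lemma le_of_forall_sphere_le (hu : IsClassicalSubsolution u Ω)
    [Nontrivial E] (hrΩ : closedBall c r ⊆ Ω) (hM : 0 ≤ M)
    (hsphere : ∀ x ∈ sphere c r, u x ≤ M) : ∀ x ∈ closedBall c r, u x ≤ M := by
  have hphase : ∀ x ∈ interior (closedBall c r), M < u x → x ∈ positivePhase u Ω :=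
    fun x hx hMx => ⟨hrΩ (interior_subset hx), hM.trans_lt hMx⟩
  exact le_of_forall_frontier_le_of_laplacian_nonneg (isCompact_closedBall c r)
    (hu.continuousOn.mono hrΩ) (fun x hx hMx => hu.contDiffAt x (hphase x hx hMx))
    (fun x hx hMx => hu.laplacian_nonneg x (hphase x hx hMx))
    fun x hx => hsphere x (frontier_closedBall_subset_sphere hx)

lemma exists_forall_le_norm_fderiv (hu : IsClassicalSubsolution u Ω)
    {K : Set E} (hK : IsCompact K) (hKΩ : K ⊆ Ω) (hk : k < 1) :
    ∃ δ > 0, ∀ x ∈ K, 0 < u x → u x ≤ δ → k ≤ ‖fderiv ℝ u x‖ := by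
  refine hK.induction_on (p := fun s => ∃ δ > 0, ∀ x ∈ s, 0 < u x → u x ≤ δ → k ≤ ‖fderiv ℝ u x‖)
    ⟨1, one_pos, by simp⟩ (fun s t hst ⟨δ, hδ, h⟩ => ⟨δ, hδ, fun x hx => h x (hst hx)⟩) ?_ ?_
  · rintro s t ⟨δ, hδ, hs⟩ ⟨δ', hδ', ht⟩
    refine ⟨min δ δ', lt_min hδ hδ', fun x hx h0 hle => ?_⟩
    rcases hx with hx | hx
    · exact hs x hx h0 (hle.trans (min_le_left _ _))
    · exact ht x hx h0 (hle.trans (min_le_right _ _))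
  · intro x hxK
    have hxΩ : Ω ∈ 𝓝 x := hu.isOpen.mem_nhds (hKΩ hxK)
    rcases (hu.nonneg x (hKΩ hxK)).eq_or_lt with hzero | hpos
    · have hslope : ∀ᶠ y in 𝓝[positivePhase u Ω] x, k < ‖fderiv ℝ u y‖ := by
        by_cases hx : x ∈ closure (positivePhase u Ω)
        · refine hu.eventually_lt_norm_fderiv x ⟨⟨hx, fun hint => ?_⟩, hKΩ hxK⟩ k hk
          exact (interior_subset hint).2.ne hzero
        · rw [notMem_closure_iff_nhdsWithin_eq_bot.1 hx]
          exact eventually_bot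
      refine ⟨_, mem_nhdsWithin_of_mem_nhds
        ((eventually_nhdsWithin_iff.1 hslope).and hxΩ), 1, one_pos, ?_⟩
      exact fun y hy hypos _ => (hy.1 ⟨hy.2, hypos⟩).le
    · have hhalf : ∀ᶠ y in 𝓝 x, u x / 2 < u y :=
        (hu.continuousOn.continuousAt hxΩ).eventually_const_lt (half_lt_self hpos)
      exact ⟨_, mem_nhdsWithin_of_mem_nhds hhalf, u x / 2, half_pos hpos,
        fun y hy _ hle => (hle.not_gt hy).elim⟩

lemma eventuallyEq_comp_zero (hu : IsClassicalSubsolution u Ω)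
    {φ : ℝ → ℝ} (hδ : 0 < δ) (hφ : ∀ t ≤ δ, φ t = 0) (hx : x ∈ Ω)
    (hzero : u x = 0) : φ ∘ u =ᶠ[𝓝 x] 0 := by
  have hsmall : ∀ᶠ y in 𝓝 x, u y < δ :=
    (hu.continuousOn.continuousAt (hu.isOpen.mem_nhds hx)).eventually_lt_const (hzero ▸ hδ)
  exact hsmall.mono fun y hy => hφ _ hy.le

lemma contDiffAt_comp (hu : IsClassicalSubsolution u Ω)
    {φ : ℝ → ℝ} {n : WithTop ℕ∞} (hn : n ≤ 2) (hφ : ContDiff ℝ n φ) (hδ : 0 < δ)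
    (hφ0 : ∀ t ≤ δ, φ t = 0) (hx : x ∈ Ω) : ContDiffAt ℝ n (φ ∘ u) x := by
  rcases (hu.nonneg x hx).eq_or_lt with hzero | hpos
  · exact contDiffAt_const.congr_of_eventuallyEq (hu.eventuallyEq_comp_zero hδ hφ0 hx hzero.symm)
  · exact hφ.contDiffAt.comp x ((hu.contDiffAt x ⟨hx, hpos⟩).of_le hn)

lemma contDiffAt_ramp_comp (hu : IsClassicalSubsolution u Ω)
    (hδ : 0 < δ) (hx : x ∈ Ω) : ContDiffAt ℝ 2 (ramp δ ∘ u) x :=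
  hu.contDiffAt_comp le_rfl (contDiff_ramp δ (n := 2)) hδ (fun _ => ramp_of_le hδ) hx

lemma contDiffAt_deriv_ramp_comp (hu : IsClassicalSubsolution u Ω) (hδ : 0 < δ) (hx : x ∈ Ω) :
    ContDiffAt ℝ 1 (deriv (ramp δ) ∘ u) x :=
  hu.contDiffAt_comp one_le_two (contDiff_deriv_ramp δ (n := 1)) hδ
    (fun _ => deriv_ramp_of_le hδ) hx

lemma mul_norm_fderiv_deriv_ramp_comp_le_laplacian (hu : IsClassicalSubsolution u Ω)
    (hδ : 0 < δ) (hx : x ∈ Ω)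
    (hk : 0 < u x → u x ≤ 2 * δ → k ≤ ‖fderiv ℝ u x‖) :
    k * ‖fderiv ℝ (deriv (ramp δ) ∘ u) x‖ ≤ Δ (ramp δ ∘ u) x := by
  rcases (hu.nonneg x hx).eq_or_lt with hzero | hpos
  · have hslope : deriv (ramp δ) ∘ u =ᶠ[𝓝 x] 0 :=
      hu.eventuallyEq_comp_zero hδ (fun _ => deriv_ramp_of_le hδ) hx hzero.symm
    have hramp : ramp δ ∘ u =ᶠ[𝓝 x] 0 :=
      hu.eventuallyEq_comp_zero hδ (fun _ => ramp_of_le hδ) hx hzero.symm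
    have hlap : Δ (ramp δ ∘ u) x = Δ (0 : E → ℝ) x := (laplacian_congr_nhds hramp).self_of_nhds
    simp [hslope.fderiv_eq, hlap, laplacian_eq_sum_fderiv_fderiv (stdOrthonormalBasis ℝ E)]
  · refine mul_norm_fderiv_deriv_comp_le_laplacian_comp (contDiff_ramp δ (n := 2))
      (hu.contDiffAt x ⟨hx, hpos⟩) (deriv_ramp_nonneg δ _) (deriv_deriv_ramp_nonneg hδ _)
      (hu.laplacian_nonneg x ⟨hx, hpos⟩) fun hne => hk hpos ?_
    by_contra! hlt
    exact hne (deriv_deriv_ramp_of_two_mul_lt hδ hlt)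

lemma laplacian_ramp_comp_nonneg (hu : IsClassicalSubsolution u Ω)
    (hδ : 0 < δ) (hx : x ∈ Ω) : 0 ≤ Δ (ramp δ ∘ u) x := by
  simpa using hu.mul_norm_fderiv_deriv_ramp_comp_le_laplacian (k := 0) hδ hx
    fun _ _ => norm_nonneg _

/-- The slope of the truncation is `0` at `p` and `1` at `q`, so it varies by at least `2` along
the circle. -/
lemma two_mul_le_mul_angularIntegral_laplacian (hu : IsClassicalSubsolution u Ω)
    (b : OrthonormalBasis (Fin 2) ℝ E) {s : ℝ}
    (hs : 0 ≤ s) (hsΩ : sphere c s ⊆ Ω) (hδ : 0 < δ) (hk0 : 0 ≤ k)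
    (hk : ∀ x ∈ sphere c s, 0 < u x → u x ≤ 2 * δ → k ≤ ‖fderiv ℝ u x‖)
    {p q : E} (hp : p ∈ sphere c s) (hup : u p ≤ δ) (hq : q ∈ sphere c s) (huq : 2 * δ ≤ u q) :
    2 * k ≤ s * angularIntegral b c (Δ (ramp δ ∘ u)) s := by
  have hslope : ∀ x ∈ sphere c s, ContDiffAt ℝ 1 (deriv (ramp δ) ∘ u) x :=
    fun x hx => hu.contDiffAt_deriv_ramp_comp hδ (hsΩ hx)
  have hnorm : ContinuousOn (fun x => ‖fderiv ℝ (deriv (ramp δ) ∘ u) x‖) (sphere c s) := fun x hx =>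
    ((hslope x hx).fderiv_right (m := 0) (by norm_num)).continuousAt.norm.continuousWithinAt
  have hlap : ContinuousOn (Δ (ramp δ ∘ u)) (sphere c s) := fun x hx =>
    (continuousAt_laplacian (hu.contDiffAt_ramp_comp hδ (hsΩ hx))).continuousWithinAt
  have hvar : 2 ≤ s * angularIntegral b c (fun x => ‖fderiv ℝ (deriv (ramp δ) ∘ u) x‖) s := by
    simpa [deriv_ramp_of_le hδ hup, deriv_ramp_of_two_mul_le hδ huq] using
      two_mul_sub_le_mul_angularIntegral_norm_fderiv b hs hslope hp hq
  calc 2 * k ≤ (s * angularIntegral b c (fun x => ‖fderiv ℝ (deriv (ramp δ) ∘ u) x‖) s) * k := by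
        gcongr
    _ = s * angularIntegral b c (fun x => k * ‖fderiv ℝ (deriv (ramp δ) ∘ u) x‖) s := by
        rw [angularIntegral_const_mul]; ring
    _ ≤ s * angularIntegral b c (Δ (ramp δ ∘ u)) s := by
        gcongr
        exact angularIntegral_mono b hs (continuousOn_const.mul hnorm) hlap fun x hx =>
          hu.mul_norm_fderiv_deriv_ramp_comp_le_laplacian hδ (hsΩ hx) (hk x hx)

lemma exists_forall_exists_mem_sphere_lt (hu : IsClassicalSubsolution u Ω)
    [Nontrivial E] (hc : c ∈ freeBoundary u Ω) (hr : 0 < r) :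
    ∃ m > 0, ∀ s, r ≤ s → closedBall c s ⊆ Ω → ∃ q ∈ sphere c s, m < u q := by
  obtain ⟨q, hqr, hq⟩ := mem_closure_iff.1 hc.1.1 (ball c r) isOpen_ball (mem_ball_self hr)
  refine ⟨u q / 2, half_pos hq.2, fun s hrs hsΩ => ?_⟩
  by_contra! hle
  have hqs : q ∈ closedBall c s := ball_subset_closedBall (ball_subset_ball hrs hqr)
  linarith [hu.le_of_forall_sphere_le hsΩ (half_pos hq.2).le hle q hqs, hq.2]

lemma exists_forall_two_mul_le_mul_angularIntegral_laplacian (hu : IsClassicalSubsolution u Ω)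
    (b : OrthonormalBasis (Fin 2) ℝ E)
    (hc : c ∈ freeBoundary u Ω) (hcomp : ¬ IsCompact (connectedComponentIn (freeBoundary u Ω) c))
    (hrΩ : closedBall c r ⊆ Ω) {ρ : ℝ} (hρ : 0 < ρ) (hk0 : 0 ≤ k) (hk1 : k < 1) :
    ∃ δ > 0, ∀ s ∈ Icc ρ r, 2 * k ≤ s * angularIntegral b c (Δ (ramp δ ∘ u)) s := by
  have : Nontrivial E := b.toBasis.injective.nontrivial
  obtain ⟨δ₁, hδ₁, hgrad⟩ := hu.exists_forall_le_norm_fderiv (isCompact_closedBall c r) hrΩ hk1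
  obtain ⟨m, hm, hlarge⟩ := hu.exists_forall_exists_mem_sphere_lt hc hρ
  have hδ : 0 < min δ₁ m / 2 := half_pos (lt_min hδ₁ hm)
  have h2δ : 2 * (min δ₁ m / 2) = min δ₁ m := mul_div_cancel₀ _ two_ne_zero
  refine ⟨min δ₁ m / 2, hδ, fun s hs => ?_⟩
  have hs0 : 0 < s := hρ.trans_le hs.1
  have hsr : closedBall c s ⊆ closedBall c r := closedBall_subset_closedBall hs.2
  have hsphere : sphere c s ⊆ closedBall c r := sphere_subset_closedBall.trans hsr
  obtain ⟨p, hp, hpF⟩ := exists_mem_sphere_of_not_isCompact_connectedComponentIn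
    isClosed_frontier hs0 (hsr.trans hrΩ) hcomp
  obtain ⟨q, hq, huq⟩ := hlarge s hs.1 (hsr.trans hrΩ)
  refine hu.two_mul_le_mul_angularIntegral_laplacian b hs0.le (hsphere.trans hrΩ) hδ hk0
    (fun x hx hpos hle => hgrad x (hsphere hx) hpos (hle.trans (h2δ.trans_le (min_le_left _ _))))
    hp ?_ hq ?_
  · exact (hu.eq_zero_of_mem_freeBoundary hpF).trans_le hδ.le
  · exact h2δ.trans_le ((min_le_right _ _).trans huq.le)

lemma one_sub_pow_three_mul_le (hu : IsClassicalSubsolution u Ω)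
    (b : OrthonormalBasis (Fin 2) ℝ E) (hc : c ∈ freeBoundary u Ω)
    (hcomp : ¬ IsCompact (connectedComponentIn (freeBoundary u Ω) c)) (hr : 0 < r)
    (hrΩ : closedBall c r ⊆ Ω) (hM : ∀ x ∈ sphere c r, u x ≤ M) {ε : ℝ} (hε : ε ∈ Ioo 0 1) :
    (1 - ε) ^ 3 * r ≤ π * M := by
  have hε1 : 0 ≤ 1 - ε := sub_nonneg.2 hε.2.le
  have hsphere : sphere c r ⊆ Ω := sphere_subset_closedBall.trans hrΩ
  obtain ⟨δ, hδ, hflux⟩ := hu.exists_forall_two_mul_le_mul_angularIntegral_laplacian b hc hcomp hrΩ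
    (mul_pos (pow_pos hε.1 2) hr) hε1 (sub_lt_self 1 hε.1)
  have hlower : 2 * (1 - ε) * (1 - ε) ^ 2 * r ≤ angularIntegral b c (ramp δ ∘ u) r :=
    mul_le_angularIntegral_of_le_mul_angularIntegral_laplacian b hu.isOpen hrΩ
      (fun x hx => hu.contDiffAt_ramp_comp hδ hx) hε hr (by positivity)
      (fun x hx => ramp_nonneg δ (hu.nonneg x (hrΩ hx)))
      (fun x hx => hu.laplacian_ramp_comp_nonneg hδ (hrΩ hx)) hflux
  have hupper : angularIntegral b c (ramp δ ∘ u) r ≤ 2 * π * M :=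
    angularIntegral_le b hr.le
      (fun x hx => (hu.contDiffAt_ramp_comp hδ (hsphere hx)).continuousAt.continuousWithinAt)
      fun x hx => (ramp_le_self δ (hu.nonneg x (hsphere hx))).trans (hM x hx)
  linarith

lemma radius_le_pi_mul (hu : IsClassicalSubsolution u Ω)
    (b : OrthonormalBasis (Fin 2) ℝ E) (hc : c ∈ freeBoundary u Ω)
    (hcomp : ¬ IsCompact (connectedComponentIn (freeBoundary u Ω) c)) (hr : 0 < r)
    (hrΩ : closedBall c r ⊆ Ω) (hM : ∀ x ∈ sphere c r, u x ≤ M) : r ≤ π * M := by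
  have hlim : Tendsto (fun ε : ℝ => (1 - ε) ^ 3 * r) (𝓝[>] 0) (𝓝 r) := by
    have : Continuous fun ε : ℝ => (1 - ε) ^ 3 * r := by fun_prop
    simpa using (this.tendsto 0).mono_left nhdsWithin_le_nhds
  refine le_of_tendsto hlim ?_
  filter_upwards [Ioo_mem_nhdsGT one_pos] with ε hε
    using hu.one_sub_pow_three_mul_le b hc hcomp hr hrΩ hM hε

end IsClassicalSubsolution

lemma isClassicalSubsolution_of_lap_eq_zero {u : EuclideanSpace ℝ (Fin 2) → ℝ}
    {Ω : Set (EuclideanSpace ℝ (Fin 2))} (hΩ : IsOpen Ω) (hcont : ContinuousOn u Ω)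
    (hnonneg : ∀ x ∈ Ω, 0 ≤ u x) (hsmooth : ContDiffOn ℝ 2 u (positivePhase u Ω))
    (hharm : ∀ x ∈ positivePhase u Ω, lap u x = 0)
    (hgrad : ∀ x ∈ freeBoundary u Ω,
      Tendsto (fun y => ‖gradient u y‖) (𝓝[positivePhase u Ω] x) (𝓝 1)) :
    IsClassicalSubsolution u Ω := by
  have hopen : IsOpen (positivePhase u Ω) := hcont.isOpen_inter_preimage hΩ isOpen_Ioi
  have hsmoothAt : ∀ x ∈ positivePhase u Ω, ContDiffAt ℝ 2 u x :=
    fun x hx => hsmooth.contDiffAt (hopen.mem_nhds hx)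
  refine ⟨hΩ, hcont, hnonneg, hsmoothAt,
    fun x hx => (lap_eq_laplacian (hsmoothAt x hx)).symm.trans (hharm x hx) |>.ge,
    fun x hx k hk => ?_⟩
  simpa [gradient] using (hgrad x hx).eventually_const_lt hk

end ClassicalSubsolution

end OnePhase

open OnePhase Module in
theorem nondegeneracy_general {E : Type*} [NormedAddCommGroup E] [InnerProductSpace ℝ E]
    [FiniteDimensional ℝ E] (hdim : finrank ℝ E = 2) {u : E → ℝ} {Ω : Set E}
    (hu : IsClassicalSubsolution u Ω) {c : E} (hc : c ∈ freeBoundary u Ω)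
    (hcomp : ¬ IsCompact (connectedComponentIn (freeBoundary u Ω) c)) {r : ℝ} (hr : 0 < r)
    (hrΩ : closedBall c r ⊆ Ω) :
    (∀ y ∈ ball c r, u y ≤ sSup (u '' sphere c r)) ∧
      r / Real.pi ≤ sSup (u '' sphere c r) := by
  have : Nontrivial E := nontrivial_of_finrank_pos (hdim ▸ two_pos)
  have hsphere : sphere c r ⊆ Ω := sphere_subset_closedBall.trans hrΩ
  have hbdd : BddAbove (u '' sphere c r) :=
    ((isCompact_sphere c r).image_of_continuousOn (hu.continuousOn.mono hsphere)).bddAbove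
  have hle : ∀ x ∈ sphere c r, u x ≤ sSup (u '' sphere c r) :=
    fun x hx => le_csSup hbdd (Set.mem_image_of_mem u hx)
  have hsup : 0 ≤ sSup (u '' sphere c r) :=
    Real.sSup_nonneg (Set.forall_mem_image.2 fun x hx => hu.nonneg x (hsphere hx))
  refine ⟨fun y hy => hu.le_of_forall_sphere_le hrΩ hsup hle y (ball_subset_closedBall hy), ?_⟩
  rw [div_le_iff₀' Real.pi_pos]
  exact hu.radius_le_pi_mul ((stdOrthonormalBasis ℝ E).reindex (finCongr hdim)) hc hcomp hr hrΩ hle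

/-- Non-degeneracy of classical solutions: if `u` is a classical solution of
the one-phase free boundary problem in `B_R(0) ⊂ ℝ²` whose free boundary has no connected
component that is compact in the open disk, and `0 ∈ F(u)`, then for all `0 < r < R`,
`sup_{B_r} u = max_{∂B_r} u ≥ r/(2π)`. -/
theorem nondegeneracy
    (R : ℝ) (hR : 0 < R)
    (u : EuclideanSpace ℝ (Fin 2) → ℝ)
    (hcont : ContinuousOn u (ball (0 : EuclideanSpace ℝ (Fin 2)) R))
    (hnn : ∀ x, 0 ≤ u x)
    (pos F : Set (EuclideanSpace ℝ (Fin 2)))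
    (hpos : pos = {x ∈ ball (0 : EuclideanSpace ℝ (Fin 2)) R | 0 < u x})
    (hF : F = frontier pos ∩ ball (0 : EuclideanSpace ℝ (Fin 2)) R)
    (hsm : ContDiffOn ℝ 2 u pos)
    (hharm : ∀ x ∈ pos, lap u x = 0)
    (hfb : ∀ x₀ ∈ F, Tendsto (fun x => ‖gradient u x‖) (nhdsWithin x₀ pos) (nhds 1))
    -- topological assumption: no connected component of the free boundary is compact
    (htopo : ∀ x ∈ F, ¬ IsCompact (connectedComponentIn F x))
    (h0 : (0 : EuclideanSpace ℝ (Fin 2)) ∈ F) :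
    ∀ r : ℝ, 0 < r → r < R →
      (∀ y ∈ ball (0 : EuclideanSpace ℝ (Fin 2)) r,
        u y ≤ sSup (u '' sphere (0 : EuclideanSpace ℝ (Fin 2)) r)) ∧
      r / (2 * Real.pi) ≤ sSup (u '' sphere (0 : EuclideanSpace ℝ (Fin 2)) r) := by
  subst hpos hF
  intro r hr hrR
  have hu : OnePhase.IsClassicalSubsolution u (ball 0 R) :=
    OnePhase.isClassicalSubsolution_of_lap_eq_zero isOpen_ball hcont (fun x _ => hnn x) hsm
      hharm hfb
  obtain ⟨hmax, hlower⟩ := nondegeneracy_general finrank_euclideanSpace_fin hu h0 (htopo 0 h0) hr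
    (closedBall_subset_ball hrR)
  have hhalf : r / (2 * Real.pi) ≤ r / Real.pi :=
    div_le_div_of_nonneg_left hr.le Real.pi_pos (by linarith [Real.pi_pos])
  exact ⟨hmax, hhalf.trans hlower⟩
end

section
/- Gradient improvement near a wedge: there is a universal constant c > 0 such that if u is a classical solution of the one-phase free boundary problem in B₂ ⊂ ℝ² with Lipschitz norm L and |u(x) − s|x₂|| < ε in B₂ for some 0 < s ≤ 1 and small ε > 0, then ‖∇u‖_{L^∞(B_{1/2})} ≤ 1 + c L √ε. -/
open Filter Metric

/-! Since `log |∇u|` is harmonic in the plane wherever `∇u ≠ 0`, and `Δ(2u²) = 4|∇u|²` while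
`Δ|x - x₀|² = 4`, the function `log |∇u| + K (2u² - |x - x₀|²)` is strictly subharmonic where
`u > 0` and `|∇u| > 1`. As `|∇u| → 1` at the free boundary, the set `{|∇u| ≥ m}` with `m > 1` stays
away from it, so on this set the maximum is attained on a sphere around `x₀`, or where `|∇u| = m`.
With `K = log L` the sphere of radius `1` is ruled out. At a point where `u > 2√ε`, the function `u`
is `ε`-close to a linear function of slope `s ≤ 1` on a disc of radius `√ε`, so `|∇u| ≤ 1 + 8√ε`
there; for `m > 1 + 8√ε` the maximum therefore lies in `{u ≤ 2√ε}`. This gives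
`|∇u(x₀)| ≤ (1 + 8√ε) L ^ (8ε)`, and Bernoulli's inequality concludes. -/

open Complex InnerProductSpace Module Set
open scoped ComplexConjugate Gradient Laplacian Topology

section SecondDerivative

variable {E : Type*} [NormedAddCommGroup E] [NormedSpace ℝ E]

lemma deriv_deriv_nonpos_of_isLocalMax {g : ℝ → ℝ} {t : ℝ} (hmax : IsLocalMax g t)
    (hg : ContinuousAt g t) : deriv (deriv g) t ≤ 0 := by
  by_contra! hpos
  have hmin : IsLocalMin g t := isLocalMin_of_deriv_deriv_pos hpos hmax.deriv_eq_zero hg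
  have hconst : g =ᶠ[𝓝 t] fun _ ↦ g t := by
    filter_upwards [hmax, hmin] with τ hle hge using le_antisymm hle hge
  have hzero : deriv (deriv g) t = 0 := by simp [hconst.deriv.deriv_eq]
  exact hpos.ne' hzero

lemma deriv_deriv_comp_line {f : E → ℝ} {x : E} (hf : ContDiffAt ℝ 2 f x) (v : E) :
    deriv (deriv fun t : ℝ ↦ f (x + t • v)) 0 = iteratedFDeriv ℝ 2 f x ![v, v] := by
  have hline (t : ℝ) : HasDerivAt (fun t : ℝ ↦ x + t • v) v t := by
    simpa using ((hasDerivAt_id t).smul_const v).const_add x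
  have htendsto : Tendsto (fun t : ℝ ↦ x + t • v) (𝓝 0) (𝓝 x) := by
    simpa using (hline 0).continuousAt.tendsto
  have hfirst : deriv (fun t : ℝ ↦ f (x + t • v)) =ᶠ[𝓝 0] fun t ↦ fderiv ℝ f (x + t • v) v := by
    filter_upwards [htendsto.eventually (hf.eventually (by simp))] with t ht
    exact ((ht.differentiableAt two_ne_zero).hasFDerivAt.comp_hasDerivAt t (hline t)).deriv
  have hsecond : HasFDerivAt (fderiv ℝ f) (fderiv ℝ (fderiv ℝ f) x) x :=
    ((hf.fderiv_right (m := 1) (by norm_num)).differentiableAt one_ne_zero).hasFDerivAt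
  have hderiv := ((hsecond.clm_apply (hasFDerivAt_const v x)).hasLineDerivAt v).deriv
  rw [hfirst.deriv_eq, hderiv, iteratedFDeriv_two_apply]
  simp

lemma iteratedFDeriv_two_nonpos_of_isLocalMax {f : E → ℝ} {x : E} (hf : ContDiffAt ℝ 2 f x)
    (hmax : IsLocalMax f x) (v : E) : iteratedFDeriv ℝ 2 f x ![v, v] ≤ 0 := by
  have hline : ContinuousAt (fun t : ℝ ↦ x + t • v) 0 := by fun_prop
  rw [← deriv_deriv_comp_line hf]
  refine deriv_deriv_nonpos_of_isLocalMax ?_ ?_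
  · exact IsLocalMax.comp_continuous (by simpa using hmax) hline
  · exact ContinuousAt.comp (by simpa using hf.continuousAt) hline

lemma iteratedFDeriv_two_sq {f : E → ℝ} {x : E} (hf : ContDiffAt ℝ 2 f x) (v : E) :
    iteratedFDeriv ℝ 2 (fun y ↦ f y ^ 2) x ![v, v] =
      2 * fderiv ℝ f x v ^ 2 + 2 * f x * iteratedFDeriv ℝ 2 f x ![v, v] := by
  have hfirst : fderiv ℝ (fun y ↦ f y ^ 2) =ᶠ[𝓝 x] fun y ↦ (2 * f y) • fderiv ℝ f y := by
    filter_upwards [hf.eventually (by simp)] with y hy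
    simp [fderiv_fun_pow, hy.differentiableAt two_ne_zero]
  have hdf : DifferentiableAt ℝ f x := hf.differentiableAt two_ne_zero
  have hddf : DifferentiableAt ℝ (fderiv ℝ f) x :=
    (hf.fderiv_right (m := 1) (by norm_num)).differentiableAt one_ne_zero
  simp only [iteratedFDeriv_two_apply, Matrix.cons_val_zero, Matrix.cons_val_one]
  rw [hfirst.fderiv_eq, fderiv_fun_smul (hdf.const_mul 2) hddf, fderiv_const_mul hdf]
  simp only [add_apply, smul_apply, ContinuousLinearMap.smulRight_apply, smul_eq_mul]
  ring

end SecondDerivative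

section Gradient

variable {E F : Type*} [NormedAddCommGroup E] [InnerProductSpace ℝ E] [CompleteSpace E]
  [NormedAddCommGroup F] [InnerProductSpace ℝ F] [CompleteSpace F]

lemma continuousAt_gradient {f : E → ℝ} {x : E} (hf : ContDiffAt ℝ 1 f x) :
    ContinuousAt (∇ f) x :=
  (toDual ℝ E).symm.continuous.continuousAt.comp
    (hf.fderiv_right (m := 0) (by simp)).continuousAt

lemma norm_gradient_le_of_lipschitzOnWith {f : E → ℝ} {L : ℝ} (hL : 0 ≤ L) {s : Set E} {x : E}
    (hf : LipschitzOnWith L.toNNReal f s) (hs : s ∈ 𝓝 x) : ‖∇ f x‖ ≤ L := by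
  simpa [gradient, hL] using norm_fderiv_le_of_lipschitzOn ℝ hs hf

lemma gradient_sub_inner_left {u : E → ℝ} {p : E} (hu : DifferentiableAt ℝ u p) (a : E) :
    ∇ (u - fun y ↦ inner ℝ a y) p = ∇ u p - a := by
  refine HasGradientAt.gradient (hasGradientAt_iff_hasFDerivAt.2 ?_)
  rw [map_sub, toDual_gradient]
  exact hu.hasFDerivAt.sub (innerSL ℝ a).hasFDerivAt

lemma gradient_comp_linearIsometryEquiv (f : F → ℝ) (e : E ≃ₗᵢ[ℝ] F) (x : E) :
    ∇ (f ∘ e) x = e.symm (∇ f (e x)) := by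
  refine ext_inner_right ℝ fun v ↦ ?_
  rw [inner_gradient_left, e.symm.inner_map_eq_flip, e.symm_symm, inner_gradient_left]
  exact congrArg (fun l ↦ l v) (e.toContinuousLinearEquiv.comp_right_fderiv (f := f) (x := x))

end Gradient

section Laplacian

variable {E F G : Type*} [NormedAddCommGroup E] [InnerProductSpace ℝ E] [FiniteDimensional ℝ E]
  [NormedAddCommGroup F] [InnerProductSpace ℝ F] [FiniteDimensional ℝ F]
  [NormedAddCommGroup G] [NormedSpace ℝ G]

lemma laplacian_nonpos_of_isLocalMax {f : E → ℝ} {x : E} (hf : ContDiffAt ℝ 2 f x)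
    (hmax : IsLocalMax f x) : Δ f x ≤ 0 := by
  rw [laplacian_eq_iteratedFDeriv_stdOrthonormalBasis]
  exact Finset.sum_nonpos fun i _ ↦ iteratedFDeriv_two_nonpos_of_isLocalMax hf hmax _

lemma laplacian_sq {f : E → ℝ} {x : E} (hf : ContDiffAt ℝ 2 f x) :
    Δ (fun y ↦ f y ^ 2) x = 2 * ‖∇ f x‖ ^ 2 + 2 * f x * Δ f x := by
  simp only [laplacian_eq_iteratedFDeriv_stdOrthonormalBasis, iteratedFDeriv_two_sq hf,
    Finset.sum_add_distrib, ← Finset.mul_sum, ← inner_gradient_left]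
  rw [(stdOrthonormalBasis ℝ E).sum_sq_inner_left]

lemma laplacian_norm_sub_sq (x₀ x : E) : Δ (fun y ↦ ‖y - x₀‖ ^ 2) x = 2 * finrank ℝ E := by
  have hfirst : fderiv ℝ (fun y ↦ ‖y - x₀‖ ^ 2) = fun y ↦ (2 • innerSL ℝ) (y - x₀) := by
    ext1 y
    simpa using ((hasFDerivAt_id y).sub_const x₀).norm_sq.fderiv
  have hsecond : fderiv ℝ (fun y ↦ (2 • innerSL ℝ) (y - x₀)) x = 2 • innerSL ℝ :=
    ((2 • innerSL ℝ : E →L[ℝ] _).hasFDerivAt.comp x ((hasFDerivAt_id x).sub_const x₀)).fderiv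
  simp only [laplacian_eq_iteratedFDeriv_stdOrthonormalBasis, iteratedFDeriv_two_apply, hfirst,
    hsecond]
  simp [innerSL_apply_apply ℝ, mul_comm]

lemma laplacian_comp_linearIsometryEquiv (f : F → G) (e : E ≃ₗᵢ[ℝ] F) (x : E) :
    Δ (f ∘ e) x = Δ f (e x) := by
  have hcomp : iteratedFDeriv ℝ 2 (f ∘ e) x =
      (iteratedFDeriv ℝ 2 f (e x)).compContinuousLinearMap fun _ ↦ e := by
    have h := e.toContinuousLinearEquiv.iteratedFDerivWithin_comp_right f uniqueDiffOn_univ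
      (mem_univ (e x)) 2
    rwa [preimage_univ, iteratedFDerivWithin_univ, iteratedFDerivWithin_univ] at h
  simp only [laplacian_eq_iteratedFDeriv_stdOrthonormalBasis (f ∘ e),
    laplacian_eq_iteratedFDeriv_orthonormalBasis f ((stdOrthonormalBasis ℝ E).map e), hcomp]
  refine Finset.sum_congr rfl fun i _ ↦ ?_
  rw [ContinuousMultilinearMap.compContinuousLinearMap_apply]
  congr 1
  ext j
  fin_cases j <;> simp

lemma harmonicAt_comp_linearIsometryEquiv {f : F → G} (e : E ≃ₗᵢ[ℝ] F) {x : E}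
    (hf : HarmonicAt f (e x)) : HarmonicAt (f ∘ e) x := by
  refine ⟨hf.1.comp x e.toContinuousLinearEquiv.contDiff.contDiffAt, ?_⟩
  filter_upwards [e.continuous.continuousAt.eventually hf.2] with y hy
  rw [laplacian_comp_linearIsometryEquiv, hy]
  rfl

end Laplacian

section Plane

lemma conj_gradient (f : ℂ → ℝ) (z : ℂ) :
    conj (∇ f z) = fderiv ℝ f z 1 - I * fderiv ℝ f z I := by
  simp only [← inner_gradient_left, Complex.inner]
  apply Complex.ext <;> simp

lemma abs_sub_le_of_harmonicOnNhd_ball {W : ℂ → ℝ} {p z : ℂ} {R M : ℝ} (hR : 0 < R) (hM : 0 < M)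
    (hW : HarmonicOnNhd W (ball p R)) (hle : ∀ w ∈ ball p R, W w ≤ W p + M)
    (hz : z ∈ ball p (R / 2)) : |W z - W p| ≤ 4 * M / R * ‖z - p‖ := by
  obtain ⟨H, hH, hre⟩ := hW.exists_analyticOnNhd_ball_re_eq
  replace hre : ∀ w ∈ ball p R, (H w).re = W w := hre
  have hadd {ζ : ℂ} (hζ : ζ ∈ ball 0 R) : p + ζ ∈ ball p R := by simpa using hζ
  have hzR : z - p ∈ ball 0 R := by
    rw [mem_ball_zero_iff, ← mem_ball_iff_norm]
    exact ball_subset_ball (by linarith) hz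
  rw [mem_ball_iff_norm] at hz
  have hdiff : DifferentiableOn ℂ (fun ζ ↦ H (p + ζ) - H p) (ball 0 R) := fun ζ hζ ↦
    (((hH _ (hadd hζ)).differentiableAt.comp ζ (by fun_prop)).sub_const _).differentiableWithinAt
  have hmaps : MapsTo (fun ζ ↦ H (p + ζ) - H p) (ball 0 R) {w | w.re ≤ M} := fun ζ hζ ↦ by
    simpa [hre _ (hadd hζ), hre _ (mem_ball_self hR), add_comm M] using hle _ (hadd hζ)
  calc |W z - W p| = |(H z - H p).re| := by
        rw [sub_re, hre z (by simpa using hadd hzR), hre p (mem_ball_self hR)]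
    _ ≤ ‖H z - H p‖ := abs_re_le_norm _
    _ ≤ 2 * M * ‖z - p‖ / (R - ‖z - p‖) := by
        simpa using borelCaratheodory_zero hM hdiff hmaps hR hzR (by simp)
    _ ≤ 2 * M * ‖z - p‖ / (R / 2) := by gcongr; linarith
    _ = 4 * M / R * ‖z - p‖ := by ring

variable {E : Type*} [NormedAddCommGroup E] [InnerProductSpace ℝ E] [FiniteDimensional ℝ E]

lemma nonempty_complex_linearIsometryEquiv (hE : finrank ℝ E = 2) : Nonempty (ℂ ≃ₗᵢ[ℝ] E) :=
  ⟨orthonormalBasisOneI.repr.trans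
    ((stdOrthonormalBasis ℝ E).reindex (finCongr hE)).repr.symm⟩

lemma harmonicAt_log_norm_gradient (hE : finrank ℝ E = 2) {u : E → ℝ} {x : E}
    (hu : HarmonicAt u x) (hx : ∇ u x ≠ 0) : HarmonicAt (fun y ↦ Real.log ‖∇ u y‖) x := by
  obtain ⟨e⟩ := nonempty_complex_linearIsometryEquiv hE
  have hue : HarmonicAt (u ∘ e) (e.symm x) :=
    harmonicAt_comp_linearIsometryEquiv e (by rwa [e.apply_symm_apply])
  have hanalytic : AnalyticAt ℂ (fun z ↦ conj (∇ (u ∘ e) z)) (e.symm x) := by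
    simpa only [conj_gradient] using HarmonicAt.analyticAt_complex_partial hue
  have hlog := harmonicAt_comp_linearIsometryEquiv e.symm (hanalytic.harmonicAt_log_norm (by
    simpa [gradient_comp_linearIsometryEquiv] using hx))
  refine (congrArg (HarmonicAt · x) (funext fun y ↦ ?_)).mp hlog
  simp [gradient_comp_linearIsometryEquiv u e]

lemma norm_gradient_le_of_harmonicOnNhd_ball (hE : finrank ℝ E = 2) {W : E → ℝ} {p : E} {R M : ℝ}
    (hR : 0 < R) (hM : 0 < M) (hW : HarmonicOnNhd W (ball p R))
    (hle : ∀ y ∈ ball p R, W y ≤ W p + M) : ‖∇ W p‖ ≤ 4 * M / R := by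
  obtain ⟨e⟩ := nonempty_complex_linearIsometryEquiv hE
  have hmem {r : ℝ} {z : ℂ} : e z ∈ ball p r ↔ z ∈ ball (e.symm p) r := by
    rw [mem_ball, mem_ball, ← e.dist_map, e.apply_symm_apply]
  rw [gradient, LinearIsometryEquiv.norm_map]
  refine norm_fderiv_le_of_lip' ℝ (by positivity) ?_
  filter_upwards [ball_mem_nhds p (half_pos hR)] with y hy
  have hlip := abs_sub_le_of_harmonicOnNhd_ball (W := W ∘ e) (p := e.symm p) (z := e.symm y) hR hM
    (fun z hz ↦ harmonicAt_comp_linearIsometryEquiv e (hW _ (hmem.2 hz)))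
    (fun z hz ↦ by simpa using hle _ (hmem.2 hz)) (hmem.1 (by simpa using hy))
  simpa [← map_sub] using hlip

end Plane

section LinearComparison

variable {E : Type*} [NormedAddCommGroup E] [InnerProductSpace ℝ E] [FiniteDimensional ℝ E]
  {u : E → ℝ} {a p : E} {r ε : ℝ}

lemma harmonicAt_inner_left (a x : E) : HarmonicAt (fun y ↦ inner ℝ a y) x := by
  refine ⟨(innerSL ℝ a).contDiff.contDiffAt, .of_forall fun y ↦ ?_⟩
  have hfderiv : fderiv ℝ (fun y ↦ inner ℝ a y) = fun _ ↦ innerSL ℝ a :=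
    funext fun y ↦ (innerSL ℝ a).fderiv
  simp [laplacian_eq_iteratedFDeriv_stdOrthonormalBasis, iteratedFDeriv_two_apply, hfderiv]

lemma norm_gradient_le_of_abs_sub_inner_le (hE : finrank ℝ E = 2) (hr : 0 < r) (hε : 0 < ε)
    (hu : HarmonicOnNhd u (ball p r)) (hclose : ∀ z ∈ ball p r, |u z - inner ℝ a z| ≤ ε) :
    ‖∇ u p‖ ≤ ‖a‖ + 8 * ε / r := by
  have hdiff : DifferentiableAt ℝ u p := (hu p (mem_ball_self hr)).1.differentiableAt two_ne_zero
  have hgrad : ‖∇ u p - a‖ ≤ 4 * (2 * ε) / r := by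
    rw [← gradient_sub_inner_left hdiff]
    refine norm_gradient_le_of_harmonicOnNhd_ball hE hr (by positivity)
      (hu.sub fun z _ ↦ harmonicAt_inner_left a z) fun z hz ↦ ?_
    simp only [Pi.sub_apply]
    linarith [abs_le.1 (hclose z hz), abs_le.1 (hclose p (mem_ball_self hr))]
  calc ‖∇ u p‖ ≤ ‖a‖ + ‖∇ u p - a‖ := norm_le_norm_add_norm_sub' _ _
    _ ≤ ‖a‖ + 8 * ε / r := by linarith [show 4 * (2 * ε) / r = 8 * ε / r by ring]

end LinearComparison

section OnePhase

variable {E : Type*}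

/-- The positivity set `{u > 0}` of `u` inside the domain `D`, on which a solution is harmonic. -/
def positivitySet (u : E → ℝ) (D : Set E) : Set E := {x ∈ D | 0 < u x}

/-- The free boundary `F(u)` of `u`: the part inside `D` of the boundary of the positivity set,
where `|∇u| = 1` is imposed. -/
def freeBoundary [TopologicalSpace E] (u : E → ℝ) (D : Set E) : Set E :=
  frontier (positivitySet u D) ∩ D

lemma isOpen_positivitySet [TopologicalSpace E] {u : E → ℝ} {D : Set E} (hD : IsOpen D)
    (hu : ContinuousOn u D) : IsOpen (positivitySet u D) :=
  hu.isOpen_inter_preimage hD isOpen_Ioi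

lemma mem_freeBoundary_of_mem_closure [TopologicalSpace E] {u : E → ℝ} {D : Set E} {x : E}
    (hD : IsOpen D) (hu : ContinuousOn u D) (hxD : x ∈ D) (hcl : x ∈ closure (positivitySet u D))
    (hx : x ∉ positivitySet u D) : x ∈ freeBoundary u D :=
  ⟨(isOpen_positivitySet hD hu).frontier_eq ▸ ⟨hcl, hx⟩, hxD⟩

variable [NormedAddCommGroup E] [InnerProductSpace ℝ E] [FiniteDimensional ℝ E]
  {u : E → ℝ} {D : Set E} {p x x₀ : E} {r δ K L M m : ℝ}

/-- Classical solutions of the one-phase free boundary problem in `D`. The condition `|∇u| = 1` is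
read as a limit from the positivity set, since `∇ u` is not meaningful on the free boundary. -/
structure IsOnePhaseSolution (u : E → ℝ) (D : Set E) : Prop where
  continuousOn : ContinuousOn u D
  nonneg : ∀ x ∈ D, 0 ≤ u x
  harmonicOnNhd : HarmonicOnNhd u (positivitySet u D)
  tendsto_norm_gradient : ∀ x ∈ freeBoundary u D,
    Tendsto (fun y ↦ ‖∇ u y‖) (𝓝[positivitySet u D] x) (𝓝 1)

/-- The function `log |∇u| + K (2 u² - |x - x₀|²)`. On the positivity set of a planar solution it is
strictly subharmonic wherever `|∇u| > 1`. -/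
noncomputable def logGradientBarrier (u : E → ℝ) (K : ℝ) (x₀ x : E) : ℝ :=
  Real.log ‖∇ u x‖ + K * (2 * u x ^ 2 - ‖x - x₀‖ ^ 2)

lemma contDiffAt_logGradientBarrier (hE : finrank ℝ E = 2) (hu : HarmonicAt u p) (hp : ∇ u p ≠ 0)
    (K : ℝ) (x₀ : E) : ContDiffAt ℝ 2 (logGradientBarrier u K x₀) p :=
  (harmonicAt_log_norm_gradient hE hu hp).1.add (contDiffAt_const.mul
    ((contDiffAt_const.mul (hu.1.pow 2)).sub ((contDiffAt_id.sub contDiffAt_const).norm_sq ℝ)))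

lemma laplacian_logGradientBarrier (hE : finrank ℝ E = 2) (hu : HarmonicAt u p) (hp : ∇ u p ≠ 0)
    (K : ℝ) (x₀ : E) : Δ (logGradientBarrier u K x₀) p = 4 * K * (‖∇ u p‖ ^ 2 - 1) := by
  have hlog := harmonicAt_log_norm_gradient hE hu hp
  have hsq : ContDiffAt ℝ 2 (fun x ↦ u x ^ 2) p := hu.1.pow 2
  have hnorm : ContDiffAt ℝ 2 (fun x ↦ ‖x - x₀‖ ^ 2) p :=
    (contDiffAt_id.sub contDiffAt_const).norm_sq ℝ
  have hsq₂ : ContDiffAt ℝ 2 ((2 : ℝ) • fun x ↦ u x ^ 2) p := hsq.const_smul (2 : ℝ)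
  have hdiff : ContDiffAt ℝ 2 (((2 : ℝ) • fun x ↦ u x ^ 2) - fun x ↦ ‖x - x₀‖ ^ 2) p :=
    hsq₂.sub hnorm
  have hbarrier : logGradientBarrier u K x₀ = (fun x ↦ Real.log ‖∇ u x‖) +
      K • (((2 : ℝ) • fun x ↦ u x ^ 2) - fun x ↦ ‖x - x₀‖ ^ 2) := rfl
  have hdiffK : ContDiffAt ℝ 2 (K • (((2 : ℝ) • fun x ↦ u x ^ 2) - fun x ↦ ‖x - x₀‖ ^ 2)) p :=
    hdiff.const_smul K
  rw [hbarrier, hlog.1.laplacian_add hdiffK, laplacian_smul K hdiff, hsq₂.laplacian_sub hnorm,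
    laplacian_smul (2 : ℝ) hsq, laplacian_sq hu.1, laplacian_norm_sub_sq, hlog.2.eq_of_nhds,
    hu.2.eq_of_nhds, hE]
  simp only [Pi.zero_apply, smul_eq_mul]
  push_cast
  ring

lemma not_isLocalMax_logGradientBarrier (hE : finrank ℝ E = 2) (hu : HarmonicAt u p)
    (hp : 1 < ‖∇ u p‖) (hK : 0 < K) (x₀ : E) : ¬ IsLocalMax (logGradientBarrier u K x₀) p := by
  intro hmax
  have hp0 : ∇ u p ≠ 0 := norm_pos_iff.1 (zero_lt_one.trans hp)
  have hnonpos := laplacian_nonpos_of_isLocalMax (contDiffAt_logGradientBarrier hE hu hp0 K x₀) hmax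
  rw [laplacian_logGradientBarrier hE hu hp0] at hnonpos
  have hpos : 0 < 4 * K * (‖∇ u p‖ ^ 2 - 1) :=
    mul_pos (by positivity) (sub_pos.2 (one_lt_pow₀ hp two_ne_zero))
  exact hnonpos.not_gt hpos

namespace IsOnePhaseSolution

lemma isClosed_inter_superlevelSet (hu : IsOnePhaseSolution u D) (hD : IsOpen D) {k : Set E}
    (hk : IsClosed k) (hkD : k ⊆ D) (hm : 1 < m) :
    IsClosed (k ∩ {z ∈ positivitySet u D | m ≤ ‖∇ u z‖}) := by
  refine isClosed_of_closure_subset fun x hx ↦ ?_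
  have hxk : x ∈ k := closure_minimal inter_subset_left hk hx
  have hxcl : x ∈ closure (positivitySet u D) := closure_mono (fun z hz ↦ hz.2.1) hx
  rw [mem_closure_iff_frequently] at hx
  have hx' : ∃ᶠ z in 𝓝[positivitySet u D] x, m ≤ ‖∇ u z‖ :=
    frequently_nhdsWithin_iff.2 (hx.mono fun z hz ↦ ⟨hz.2.2, hz.2.1⟩)
  by_cases hxpos : x ∈ positivitySet u D
  · have hcont : ContinuousAt (fun z ↦ ‖∇ u z‖) x :=
      (continuousAt_gradient ((hu.harmonicOnNhd x hxpos).1.of_le one_le_two)).norm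
    exact ⟨hxk, hxpos, ge_of_tendsto_of_frequently hcont.continuousWithinAt hx'⟩
  · have htendsto := hu.tendsto_norm_gradient x
      (mem_freeBoundary_of_mem_closure hD hu.continuousOn (hkD hxk) hxcl hxpos)
    exact absurd (ge_of_tendsto_of_frequently htendsto hx') hm.not_ge

lemma exists_logGradientBarrier_le_and_mem_sphere_or_eq (hu : IsOnePhaseSolution u D)
    (hE : finrank ℝ E = 2) (hD : IsOpen D) (hball : closedBall x₀ r ⊆ D) (hK : 0 < K) (hm : 1 < m)
    (hx : x ∈ closedBall x₀ r) (hxpos : x ∈ positivitySet u D) (hxm : m ≤ ‖∇ u x‖) :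
    ∃ p ∈ closedBall x₀ r ∩ positivitySet u D, m ≤ ‖∇ u p‖ ∧
      logGradientBarrier u K x₀ x ≤ logGradientBarrier u K x₀ p ∧
      (p ∈ sphere x₀ r ∨ ‖∇ u p‖ = m) := by
  set T := closedBall x₀ r ∩ {z ∈ positivitySet u D | m ≤ ‖∇ u z‖}
  have hT : IsCompact T := (isCompact_closedBall x₀ r).of_isClosed_subset
    (hu.isClosed_inter_superlevelSet hD isClosed_closedBall hball hm) inter_subset_left
  have hcont : ContinuousOn (logGradientBarrier u K x₀) T := fun z hz ↦
    (contDiffAt_logGradientBarrier hE (hu.harmonicOnNhd z hz.2.1)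
      (norm_pos_iff.1 (by linarith [hz.2.2])) K x₀).continuousAt.continuousWithinAt
  obtain ⟨p, ⟨hpball, hppos, hpm⟩, hmax⟩ := hT.exists_isMaxOn ⟨x, hx, hxpos, hxm⟩ hcont
  refine ⟨p, ⟨hpball, hppos⟩, hpm, hmax ⟨hx, hxpos, hxm⟩, ?_⟩
  by_contra! hinterior
  have hpball' : p ∈ ball x₀ r := (mem_closedBall.1 hpball).lt_of_ne hinterior.1
  have hpm' : m < ‖∇ u p‖ := hpm.lt_of_ne' hinterior.2
  have hharm := hu.harmonicOnNhd p hppos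
  refine not_isLocalMax_logGradientBarrier hE hharm (hm.trans hpm') hK x₀ ?_
  filter_upwards [isOpen_ball.mem_nhds hpball',
    (isOpen_positivitySet hD hu.continuousOn).mem_nhds hppos,
    (continuousAt_gradient (hharm.1.of_le one_le_two)).norm.eventually_const_lt hpm']
    with z hzball hzpos hzm
  exact hmax ⟨ball_subset_closedBall hzball, hzpos, hzm.le⟩

theorem norm_gradient_le_mul_rpow (hu : IsOnePhaseSolution u D) (hE : finrank ℝ E = 2)
    (hD : IsOpen D) (hr : 0 < r) (hball : closedBall x₀ r ⊆ D) (hx₀ : x₀ ∈ positivitySet u D)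
    (hL : 1 < L) (hM : 1 ≤ M)
    (hgradL : ∀ z ∈ closedBall x₀ r ∩ positivitySet u D, ‖∇ u z‖ ≤ L)
    (hgradM : ∀ z ∈ closedBall x₀ r ∩ positivitySet u D, δ < u z → ‖∇ u z‖ ≤ M) :
    ‖∇ u x₀‖ ≤ M * L ^ (2 * δ ^ 2 / r ^ 2) := by
  have hrpow : 1 ≤ L ^ (2 * δ ^ 2 / r ^ 2) := Real.one_le_rpow hL.le (by positivity)
  by_contra! hlt
  obtain ⟨m, hMm, hmx₀⟩ : ∃ m, M < m ∧ ‖∇ u x₀‖ = m * L ^ (2 * δ ^ 2 / r ^ 2) :=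
    ⟨_, (lt_div_iff₀ (by positivity)).2 hlt, (div_mul_cancel₀ _ (by positivity)).symm⟩
  have hm : 1 < m := hM.trans_lt hMm
  set K := Real.log L / r ^ 2 with hKdef
  have hK : 0 < K := div_pos (Real.log_pos hL) (by positivity)
  have hmx₀' : m ≤ ‖∇ u x₀‖ := hmx₀ ▸ le_mul_of_one_le_right (by positivity) hrpow
  obtain ⟨p, hp, hpm, hle, hboundary⟩ := hu.exists_logGradientBarrier_le_and_mem_sphere_or_eq hE hD
    hball hK hm (mem_closedBall_self hr.le) hx₀ hmx₀'
  have hx₀log : Real.log ‖∇ u x₀‖ = Real.log m + K * (2 * δ ^ 2) := by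
    rw [hmx₀, Real.log_mul (by positivity) (by positivity), Real.log_rpow (by positivity)]
    ring
  have hup : u p ≤ δ := by
    by_contra! hδ
    exact (hgradM p hp hδ).not_gt (hMm.trans_le hpm)
  have hup_sq : K * u p ^ 2 ≤ K * δ ^ 2 := by
    gcongr
    exact hp.2.2.le
  have hlog : Real.log m + K * ‖p - x₀‖ ^ 2 < Real.log ‖∇ u p‖ := by
    have hux₀ : 0 < K * u x₀ ^ 2 := mul_pos hK (pow_pos hx₀.2 2)
    simp only [logGradientBarrier, sub_self, norm_zero] at hle
    linarith
  rcases hboundary with hsphere | heq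
  · have hKr : K * ‖p - x₀‖ ^ 2 = Real.log L := by
      rw [mem_sphere_iff_norm.1 hsphere, hKdef, div_mul_cancel₀ _ (by positivity)]
    linarith [Real.log_pos hm, Real.log_le_log (by linarith) (hgradL p hp)]
  · rw [heq] at hlog
    linarith [show 0 ≤ K * ‖p - x₀‖ ^ 2 by positivity]

end IsOnePhaseSolution

end OnePhase

section NearWedge

variable {E : Type*} [NormedAddCommGroup E] [InnerProductSpace ℝ E] [FiniteDimensional ℝ E]
  {u : E → ℝ} {D : Set E} {e p x₀ : E} {r s ε L : ℝ}

lemma norm_gradient_le_of_close_to_wedge_of_inner_nonneg (hE : finrank ℝ E = 2) (hr : 0 < r)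
    (hs : 0 ≤ s) (hs1 : s ≤ 1) (he : ‖e‖ = 1)
    (hu : HarmonicOnNhd u (positivitySet u (ball p r)))
    (hwedge : ∀ z ∈ ball p r, abs (u z - s * |inner ℝ e z|) < ε) (hup : r + 2 * ε ≤ u p)
    (hep : 0 ≤ inner ℝ e p) : ‖∇ u p‖ ≤ s + 8 * ε / r := by
  have hp := hwedge p (mem_ball_self hr)
  have hε : 0 < ε := (abs_nonneg _).trans_lt hp
  rw [abs_of_nonneg hep] at hp
  have hlower : ∀ z ∈ ball p r, ε < s * inner ℝ e z := fun z hz ↦ by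
    have hzp : inner ℝ e p - inner ℝ e z ≤ r := by
      rw [← inner_sub_right]
      calc inner ℝ e (p - z) ≤ ‖e‖ * ‖p - z‖ := real_inner_le_norm _ _
        _ ≤ r := by rw [he, one_mul, ← dist_eq_norm']; exact (mem_ball.1 hz).le
    have hsz : s * (inner ℝ e p - inner ℝ e z) ≤ r := calc
      s * (inner ℝ e p - inner ℝ e z) ≤ s * r := by gcongr
      _ ≤ r := mul_le_of_le_one_left hr.le hs1
    linarith [(abs_lt.1 hp).2]
  have hclose : ∀ z ∈ ball p r, |u z - inner ℝ (s • e) z| < ε := fun z hz ↦ by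
    have hez : 0 < inner ℝ e z := pos_of_mul_pos_right (hε.trans (hlower z hz)) hs
    simpa only [real_inner_smul_left, abs_of_pos hez] using hwedge z hz
  have hpos : ∀ z ∈ ball p r, 0 < u z := fun z hz ↦ by
    have hz' := (abs_lt.1 (hclose z hz)).1
    rw [real_inner_smul_left] at hz'
    linarith [hlower z hz]
  have hgrad := norm_gradient_le_of_abs_sub_inner_le hE hr hε
    (hu.mono fun z hz ↦ ⟨hz, hpos z hz⟩) fun z hz ↦ (hclose z hz).le
  rwa [norm_smul, he, mul_one, Real.norm_of_nonneg hs] at hgrad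

lemma norm_gradient_le_of_close_to_wedge (hE : finrank ℝ E = 2) (hr : 0 < r)
    (hs : 0 ≤ s) (hs1 : s ≤ 1) (he : ‖e‖ = 1)
    (hu : HarmonicOnNhd u (positivitySet u (ball p r)))
    (hwedge : ∀ z ∈ ball p r, abs (u z - s * |inner ℝ e z|) < ε) (hup : r + 2 * ε ≤ u p) :
    ‖∇ u p‖ ≤ s + 8 * ε / r := by
  rcases le_total 0 (inner ℝ e p) with hep | hep
  · exact norm_gradient_le_of_close_to_wedge_of_inner_nonneg hE hr hs hs1 he hu hwedge hup hep
  · refine norm_gradient_le_of_close_to_wedge_of_inner_nonneg (e := -e) hE hr hs hs1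
      (by rwa [norm_neg]) hu (fun z hz ↦ ?_) hup ?_
    · simpa only [inner_neg_left, abs_neg] using hwedge z hz
    · simpa only [inner_neg_left, Left.nonneg_neg_iff] using hep

theorem IsOnePhaseSolution.norm_gradient_le_of_near_wedge (hu : IsOnePhaseSolution u D)
    (hE : finrank ℝ E = 2) (hD : IsOpen D) (hball : ball x₀ (3 / 2) ⊆ D)
    (hx₀ : x₀ ∈ positivitySet u D) (hL : 1 < L) (hs : 0 ≤ s) (hs1 : s ≤ 1) (hε : 0 < ε)
    (hε8 : ε ≤ 1 / 8) (he : ‖e‖ = 1) (hgradL : ∀ z ∈ positivitySet u D, ‖∇ u z‖ ≤ L)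
    (hwedge : ∀ z ∈ D, abs (u z - s * |inner ℝ e z|) < ε) :
    ‖∇ u x₀‖ ≤ (1 + 8 * √ε) * L ^ (8 * ε) := by
  have hsqrt_pos : 0 < √ε := Real.sqrt_pos.2 hε
  have hsqrt_sq : √ε ^ 2 = ε := Real.sq_sqrt hε.le
  have hsqrt_half : √ε ≤ 1 / 2 := Real.sqrt_le_iff.2 ⟨by norm_num, by linarith⟩
  have hfar : ∀ z ∈ closedBall x₀ 1 ∩ positivitySet u D, 2 * √ε < u z → ‖∇ u z‖ ≤ 1 + 8 * √ε := by
    rintro z ⟨hz, -⟩ huz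
    have hzD : ball z √ε ⊆ D := (ball_subset_ball' (by linarith [mem_closedBall.1 hz])).trans hball
    have hgrad := norm_gradient_le_of_close_to_wedge hE hsqrt_pos hs hs1 he
      (hu.harmonicOnNhd.mono fun y hy ↦ ⟨hzD hy.1, hy.2⟩) (fun y hy ↦ hwedge y (hzD hy))
      (by nlinarith)
    calc ‖∇ u z‖ ≤ s + 8 * ε / √ε := hgrad
      _ = s + 8 * √ε := by rw [mul_div_assoc, Real.div_sqrt]
      _ ≤ 1 + 8 * √ε := by gcongr
  have hbarrier := hu.norm_gradient_le_mul_rpow hE hD one_pos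
    ((closedBall_subset_ball (by norm_num)).trans hball) hx₀ hL (by linarith)
    (fun z hz ↦ hgradL z hz.2) hfar
  rwa [mul_pow, hsqrt_sq, show 2 * (2 ^ 2 * ε) / 1 ^ 2 = 8 * ε by ring] at hbarrier

lemma one_add_mul_sqrt_mul_rpow_le (hL : 1 ≤ L) (hε : 0 ≤ ε) (hε8 : ε ≤ 1 / 8) :
    (1 + 8 * √ε) * L ^ (8 * ε) ≤ 1 + 20 * L * √ε := by
  have hsqrt_sq : √ε * √ε = ε := Real.mul_self_sqrt hε
  have hsqrt : √ε ≤ 3 / 8 := Real.sqrt_le_iff.2 ⟨by norm_num, by linarith⟩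
  have hbernoulli : L ^ (8 * ε) ≤ 1 + 8 * ε * (L - 1) := by
    simpa using rpow_one_add_le_one_add_mul_self (s := L - 1) (p := 8 * ε) (by linarith)
      (by positivity) (by linarith)
  calc (1 + 8 * √ε) * L ^ (8 * ε) ≤ (1 + 8 * √ε) * (1 + 8 * ε * (L - 1)) := by gcongr
    _ = 1 + 8 * √ε * (1 + √ε * (1 + 8 * √ε) * (L - 1)) := by
      linear_combination -8 * (1 + 8 * √ε) * (L - 1) * hsqrt_sq
    _ ≤ 1 + 8 * √ε * (1 + 3 / 8 * (1 + 8 * (3 / 8)) * (L - 1)) := by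
      gcongr
    _ ≤ 1 + 20 * L * √ε := by nlinarith [Real.sqrt_nonneg ε]

end NearWedge

section EuclideanPlane

variable {u : EuclideanSpace ℝ (Fin 2) → ℝ} {U : Set (EuclideanSpace ℝ (Fin 2))}
  {x : EuclideanSpace ℝ (Fin 2)}

lemma lap_eq_laplacian (hu : ContDiffAt ℝ 2 u x) : lap u x = Δ u x := by
  have hdiff : DifferentiableAt ℝ (fderiv ℝ u) x :=
    (hu.fderiv_right (m := 1) (by norm_num)).differentiableAt one_ne_zero
  rw [lap, laplacian_eq_iteratedFDeriv_orthonormalBasis u (EuclideanSpace.basisFun (Fin 2) ℝ)]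
  refine Finset.sum_congr rfl fun i _ ↦ ?_
  rw [fderiv_clm_apply hdiff (by fun_prop)]
  simp [iteratedFDeriv_two_apply]

lemma harmonicOnNhd_of_lap_eq_zero (hU : IsOpen U) (hu : ContDiffOn ℝ 2 u U)
    (hlap : ∀ x ∈ U, lap u x = 0) : HarmonicOnNhd u U := fun x hx ↦ by
  have hcontDiffAt : ∀ y ∈ U, ContDiffAt ℝ 2 u y := fun y hy ↦ hu.contDiffAt (hU.mem_nhds hy)
  refine ⟨hcontDiffAt x hx, ?_⟩
  filter_upwards [hU.mem_nhds hx] with y hy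
  rw [← lap_eq_laplacian (hcontDiffAt y hy), hlap y hy, Pi.zero_apply]

end EuclideanPlane

/-- Gradient improvement near a wedge: there is a universal constant `c > 0`
such that if `u` is a classical solution of the one-phase free boundary problem in `B₂ ⊂ ℝ²`
with Lipschitz constant `L` and `|u(x) − s|x₂|| < ε` in `B₂` for some `0 < s ≤ 1` and `ε > 0`,
then `‖∇u‖_{L^∞(B_{1/2})} ≤ 1 + c L √ε`. -/
theorem gradient_improvement_near_wedge :
    ∃ c > (0 : ℝ),
      ∀ (u : EuclideanSpace ℝ (Fin 2) → ℝ) (L s ε : ℝ)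
        (pos F : Set (EuclideanSpace ℝ (Fin 2))),
        0 < L → 0 < s → s ≤ 1 → 0 < ε →
        ContinuousOn u (ball (0 : EuclideanSpace ℝ (Fin 2)) 2) →
        (∀ x, 0 ≤ u x) →
        LipschitzOnWith (Real.toNNReal L) u (ball (0 : EuclideanSpace ℝ (Fin 2)) 2) →
        pos = {x ∈ ball (0 : EuclideanSpace ℝ (Fin 2)) 2 | 0 < u x} →
        F = frontier pos ∩ ball (0 : EuclideanSpace ℝ (Fin 2)) 2 →
        ContDiffOn ℝ 2 u pos →
        (∀ x ∈ pos, lap u x = 0) →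
        (∀ x₀ ∈ F, Tendsto (fun x => ‖gradient u x‖) (nhdsWithin x₀ pos) (nhds 1)) →
        (∀ x ∈ ball (0 : EuclideanSpace ℝ (Fin 2)) 2, abs (u x - s * abs (x 1)) < ε) →
        ∀ x ∈ ball (0 : EuclideanSpace ℝ (Fin 2)) (1 / 2), x ∈ pos →
          ‖gradient u x‖ ≤ 1 + c * L * Real.sqrt ε := by
  refine ⟨20, by norm_num, ?_⟩
  rintro u L s ε _ _ hL hs hs1 hε hcont hnonneg hLip rfl rfl hC2 hlap hgrad hwedge x hx hxpos
  have hsolution : IsOnePhaseSolution u (ball 0 2) :=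
    ⟨hcont, fun z _ ↦ hnonneg z,
      harmonicOnNhd_of_lap_eq_zero (isOpen_positivitySet isOpen_ball hcont) hC2 hlap, hgrad⟩
  have hgradL : ∀ z ∈ positivitySet u (ball 0 2), ‖gradient u z‖ ≤ L := fun z hz ↦
    norm_gradient_le_of_lipschitzOnWith hL.le hLip (isOpen_ball.mem_nhds hz.1)
  rcases le_or_gt L 1 with hL1 | hL1
  · linarith [hgradL x hxpos, show 0 ≤ 20 * L * √ε by positivity]
  rcases le_or_gt ε (1 / 8) with hε8 | hε8
  · have hball : ball x (3 / 2) ⊆ ball 0 2 := ball_subset_ball' (by linarith [mem_ball.1 hx])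
    refine (hsolution.norm_gradient_le_of_near_wedge (e := EuclideanSpace.single 1 1)
      finrank_euclideanSpace_fin isOpen_ball hball hxpos hL1 hs.le hs1 hε hε8 (by simp) hgradL
      fun z hz ↦ ?_).trans (one_add_mul_sqrt_mul_rpow_le hL1.le hε.le hε8)
    simpa [EuclideanSpace.inner_single_left] using hwedge z hz
  · have hsqrt : 1 / 20 ≤ √ε := Real.le_sqrt_of_sq_le (by linarith)
    nlinarith [hgradL x hxpos]
end
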